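/- arXiv:1909.07923 — 2 statements merged into one kernel-verified Lean document; each statement's English description precedes it below -/
import Mathlib

section
/- (Asgeirsson's first theorem.) Let r : ℝ⁴ → ℝ be twice continuously differentiable and satisfy the ultrahyperbolic equation (∂²_{ξ₁ξ₁} − ∂²_{ξ₂ξ₂} − ∂²_{ξ₃ξ₃} + ∂²_{ξ₄ξ₄}) r = 0 on all of ℝ⁴. Then for every (ξ₁, ξ₂, ξ₃, ξ₄) ∈ ℝ⁴ and every R ≥ 0, ∫₀^{2π} r(ξ₁ + R cos θ, ξ₂, ξ₃, ξ₄ + R sin θ) dθ = ∫₀^{2π} r(ξ₁, ξ₂ + R cos θ, ξ₃ + R sin θ, ξ₄) dθ; that is, the integral of r over the circle of radius R centered at the point in the (ξ₁, ξ₄)-plane equals the integral over the circle of the same radius in the (ξ₂, ξ₃)-plane. -/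
open Real MeasureTheory intervalIntegral

/-!
Average `F` over two ellipses with conjugate radii `a • v`, `a • w` and `b • v'`, `b • w'`.
Integrating by parts over each angle shows that the average `u (a, b)` satisfies the
Euler–Poisson–Darboux equation `u_aa + u_a / a = u_bb + u_b / b`, which is symmetric in `a` and `b`.
Hence `u (a, b) - u (b, a)` solves it too and vanishes on the diagonal; a weighted energy argument
in the sector `0 ≤ b ≤ a` forces it to vanish there. Comparing `u (1, 0)` with `u (0, 1)` gives the
mean value identity.
-/

namespace Asgeirsson

open Set Filter Topology

section ParametricIntegral

universe u v

lemma hasFDerivAt_intervalIntegral {H : Type u} {G : Type v} [NormedAddCommGroup H]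
    [NormedSpace ℝ H] [NormedAddCommGroup G] [NormedSpace ℝ G]
    {f : H → ℝ → G} {f' : H → ℝ → H →L[ℝ] G} (hf : ∀ x, Continuous (f x))
    (hf' : Continuous fun q : H × ℝ => f' q.1 q.2)
    (hd : ∀ x t, HasFDerivAt (fun y => f y t) (f' x t) x) (a b : ℝ) (x₀ : H) :
    HasFDerivAt (fun x => ∫ t in a..b, f x t) (∫ t in a..b, f' x₀ t) x₀ := by
  have hf'₀ : Continuous (f' x₀) := by fun_prop
  obtain ⟨C, hC⟩ := isCompact_uIcc.exists_bound_of_continuousOn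
    (hf'₀.continuousOn (s := uIcc a b))
  have hbound : ∀ᶠ x in 𝓝 x₀, ∀ t ∈ uIcc a b, ‖f' x t‖ < C + 1 :=
    isCompact_uIcc.eventually_forall_of_forall_eventually fun t ht =>
      hf'.norm.continuousAt.eventually_lt_const ((hC t ht).trans_lt (lt_add_one C))
  exact hasFDerivAt_integral_of_dominated_of_fderiv_le hbound
    (.of_forall fun x => (hf x).aestronglyMeasurable) ((hf x₀).intervalIntegrable a b)
    hf'₀.aestronglyMeasurable
    (.of_forall fun t ht x hx => (hx t (uIoc_subset_uIcc ht)).le)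
    intervalIntegrable_const (.of_forall fun t _ x _ => hd x t)

lemma hasDerivAt_intervalIntegral {G : Type v} [NormedAddCommGroup G] [NormedSpace ℝ G]
    {f f' : ℝ → ℝ → G} (hf : ∀ x, Continuous (f x))
    (hf' : Continuous fun q : ℝ × ℝ => f' q.1 q.2)
    (hd : ∀ x t, HasDerivAt (fun y => f y t) (f' x t) x) (a b x₀ : ℝ) :
    HasDerivAt (fun x => ∫ t in a..b, f x t) (∫ t in a..b, f' x₀ t) x₀ := by
  have hL : Continuous fun q : ℝ × ℝ => ContinuousLinearMap.toSpanSingleton ℝ (f' q.1 q.2) :=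
    (ContinuousLinearMap.toSpanSingletonCLE (𝕜 := ℝ)).continuous.comp hf'
  have hL₀ : Continuous fun t => ContinuousLinearMap.toSpanSingleton ℝ (f' x₀ t) :=
    hL.comp (by fun_prop : Continuous fun t : ℝ => (x₀, t))
  have h := (hasFDerivAt_intervalIntegral hf hL (fun x t => hd x t) a b x₀).hasDerivAt
  rw [ContinuousLinearMap.intervalIntegral_apply (hL₀.intervalIntegrable a b)] at h
  simpa only [ContinuousLinearMap.toSpanSingleton_apply, one_smul] using h

lemma contDiff_nat_intervalIntegral {H : Type u} [NormedAddCommGroup H] [NormedSpace ℝ H]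
    (n : ℕ) : ∀ {G : Type max u v} [NormedAddCommGroup G] [NormedSpace ℝ G] {f : H → ℝ → G},
      ContDiff ℝ n (fun q : H × ℝ => f q.1 q.2) → ∀ a b : ℝ,
      ContDiff ℝ n fun x => ∫ t in a..b, f x t := by
  induction n with
  | zero =>
    intro G _ _ f hf a b
    exact contDiff_zero.2 (continuous_parametric_intervalIntegral_of_continuous' hf.continuous a b)
  | succ n ih =>
    intro G _ _ f hf a b
    let f' (x : H) (t : ℝ) : H →L[ℝ] G :=
      (fderiv ℝ (fun q : H × ℝ => f q.1 q.2) (x, t)).comp (ContinuousLinearMap.inl ℝ H ℝ)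
    have hf' : ContDiff ℝ n fun q : H × ℝ => f' q.1 q.2 :=
      (hf.fderiv_right (by norm_cast)).clm_comp contDiff_const
    refine contDiff_succ_iff_hasFDerivAt.2 ⟨_, ih hf' a b,
      hasFDerivAt_intervalIntegral (fun x => ?_) hf'.continuous (fun x t => ?_) a b⟩
    · exact hf.continuous.comp (by fun_prop : Continuous fun t : ℝ => (x, t))
    · have hfd : HasFDerivAt (fun q : H × ℝ => f q.1 q.2) _ (x, t) :=
        (hf.differentiable (by simp) (x, t)).hasFDerivAt
      exact HasFDerivAt.comp (f := fun y : H => (y, t)) x hfd (hasFDerivAt_prodMk_left x t)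

lemma contDiff_intervalIntegral {H : Type u} {G : Type v} [NormedAddCommGroup H]
    [NormedSpace ℝ H] [NormedAddCommGroup G] [NormedSpace ℝ G] [CompleteSpace G] {n : ℕ∞}
    {f : H → ℝ → G} (hf : ContDiff ℝ n fun q : H × ℝ => f q.1 q.2) (a b : ℝ) :
    ContDiff ℝ n fun x => ∫ t in a..b, f x t := by
  -- The induction replaces `G` by `H →L[ℝ] G`, so it needs `G` in a universe above that of `H`.
  let e : G ≃L[ℝ] ULift.{u} G := ContinuousLinearEquiv.ulift.symm
  refine e.comp_contDiff_iff.1 (contDiff_iff_forall_nat_le.2 fun m hm => ?_)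
  have hef : ContDiff ℝ m fun q : H × ℝ => e (f q.1 q.2) :=
    e.contDiff.comp (hf.of_le (by exact_mod_cast hm))
  have hcomm : (e ∘ fun x => ∫ t in a..b, f x t) = fun x => ∫ t in a..b, e (f x t) := by
    ext1 x
    have hfx : Continuous (f x) := hf.continuous.comp (by fun_prop : Continuous fun t : ℝ => (x, t))
    exact ((e : G →L[ℝ] ULift.{u} G).intervalIntegral_comp_comm (hfx.intervalIntegrable a b)).symm
  rw [hcomm]
  exact contDiff_nat_intervalIntegral.{u, v} m hef a b

lemma antitoneOn_intervalIntegral_of_fderiv_le {e g : ℝ × ℝ → ℝ} (he : ContDiff ℝ 1 e)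
    (hg : ContDiff ℝ 1 g) {c d : ℝ} (hcd : c ≤ d) {D : Set ℝ} (hD : Convex ℝ D)
    (hle : ∀ a ∈ D, ∀ s ∈ Icc c d, fderiv ℝ e (a, s) (1, 0) ≤ fderiv ℝ g (a, s) (0, 1))
    (hends : ∀ a ∈ D, g (a, d) ≤ g (a, c)) :
    AntitoneOn (fun a => ∫ s in c..d, e (a, s)) D := by
  have := he.continuous_fderiv (by norm_num)
  have := hg.continuous_fderiv (by norm_num)
  have hderiv (a : ℝ) : HasDerivAt (fun a => ∫ s in c..d, e (a, s))
      (∫ s in c..d, fderiv ℝ e (a, s) (1, 0)) a :=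
    hasDerivAt_intervalIntegral (f' := fun a s => fderiv ℝ e (a, s) (1, 0))
      (fun a => he.continuous.comp (by fun_prop)) (by fun_prop)
      (fun a s => (he.differentiable (by norm_num) (a, s)).hasFDerivAt.comp_hasDerivAt a
        ((hasDerivAt_id a).prodMk (hasDerivAt_const a s))) c d a
  have hflux (a : ℝ) : ∫ s in c..d, fderiv ℝ g (a, s) (0, 1) = g (a, d) - g (a, c) :=
    integral_eq_sub_of_hasDerivAt (fun s _ =>
      (hg.differentiable (by norm_num) (a, s)).hasFDerivAt.comp_hasDerivAt s
        ((hasDerivAt_const s a).prodMk (hasDerivAt_id s)))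
      (Continuous.intervalIntegrable (by fun_prop) _ _)
  refine antitoneOn_of_deriv_nonpos hD
    (fun a _ => (hderiv a).continuousAt.continuousWithinAt)
    (fun a _ => (hderiv a).differentiableAt.differentiableWithinAt) fun a ha => ?_
  have haD : a ∈ D := interior_subset ha
  rw [(hderiv a).deriv]
  calc ∫ s in c..d, fderiv ℝ e (a, s) (1, 0)
      ≤ ∫ s in c..d, fderiv ℝ g (a, s) (0, 1) :=
        integral_mono_on hcd (Continuous.intervalIntegrable (by fun_prop) _ _)
          (Continuous.intervalIntegrable (by fun_prop) _ _) (hle a haD)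
    _ = g (a, d) - g (a, c) := hflux a
    _ ≤ 0 := sub_nonpos.2 (hends a haD)

end ParametricIntegral

section SecondDerivative

variable {E : Type*} [NormedAddCommGroup E] [NormedSpace ℝ E] {F : E → ℝ}

lemma continuous_fderiv_fderiv (hF : ContDiff ℝ 2 F) : Continuous (fderiv ℝ (fderiv ℝ F)) :=
  (hF.fderiv_right (m := 1) (by norm_num)).continuous_fderiv (by norm_num)

lemma hasDerivAt_fderiv_apply (hF : ContDiff ℝ 2 F) {γ δ : ℝ → E} {v w : E} {t : ℝ}
    (hγ : HasDerivAt γ v t) (hδ : HasDerivAt δ w t) :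
    HasDerivAt (fun s => fderiv ℝ F (γ s) (δ s))
      (fderiv ℝ (fderiv ℝ F) (γ t) v (δ t) + fderiv ℝ F (γ t) w) t := by
  have hF' : Differentiable ℝ (fderiv ℝ F) :=
    (hF.fderiv_right (m := 1) (by norm_num)).differentiable (by norm_num)
  exact ((hF' (γ t)).hasFDerivAt.comp_hasDerivAt t hγ).clm_apply hδ

lemma hasDerivAt_fderiv_apply_const (hF : ContDiff ℝ 2 F) {γ : ℝ → E} {v : E} {t : ℝ}
    (hγ : HasDerivAt γ v t) (w : E) :
    HasDerivAt (fun s => fderiv ℝ F (γ s) w) (fderiv ℝ (fderiv ℝ F) (γ t) v w) t := by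
  simpa only [map_zero, add_zero] using hasDerivAt_fderiv_apply hF hγ (hasDerivAt_const t w)

lemma deriv_comp_line (hF : ContDiff ℝ 1 F) {γ : ℝ → E} {v : E} (hγ : ∀ t, HasDerivAt γ v t) :
    (deriv fun s => F (γ s)) = fun s => fderiv ℝ F (γ s) v := by
  ext1 s
  exact ((hF.differentiable (by norm_num) (γ s)).hasFDerivAt.comp_hasDerivAt s (hγ s)).deriv

lemma deriv_deriv_comp_line (hF : ContDiff ℝ 2 F) {γ : ℝ → E} {v : E}
    (hγ : ∀ t, HasDerivAt γ v t) (t : ℝ) :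
    deriv (deriv fun s => F (γ s)) t = fderiv ℝ (fderiv ℝ F) (γ t) v v := by
  rw [deriv_comp_line (hF.of_le (by norm_num)) hγ,
    (hasDerivAt_fderiv_apply_const hF (hγ t) v).deriv]

lemma hasDerivAt_add_smul (x v : E) (s : ℝ) : HasDerivAt (fun s : ℝ => x + s • v) v s := by
  simpa using ((hasDerivAt_id s).smul_const v).const_add x

lemma deriv_integral_comp_line (hF : ContDiff ℝ 1 F) {α β : ℝ → E} (hα : Continuous α)
    (hβ : Continuous β) (a b : ℝ) :
    (deriv fun s : ℝ => ∫ t in a..b, F (β t + s • α t)) =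
      fun s : ℝ => ∫ t in a..b, fderiv ℝ F (β t + s • α t) (α t) := by
  have := hF.continuous_fderiv (by norm_num)
  ext1 s
  exact (hasDerivAt_intervalIntegral
    (f' := fun s t => fderiv ℝ F (β t + s • α t) (α t))
    (fun s => hF.continuous.comp (by fun_prop)) (by fun_prop)
    (fun s t => (hF.differentiable (by norm_num) _).hasFDerivAt.comp_hasDerivAt s
      (hasDerivAt_add_smul (β t) (α t) s)) a b s).deriv

lemma deriv_deriv_integral_comp_line (hF : ContDiff ℝ 2 F) {α β : ℝ → E} (hα : Continuous α)
    (hβ : Continuous β) (a b s : ℝ) :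
    deriv (deriv fun s : ℝ => ∫ t in a..b, F (β t + s • α t)) s =
      ∫ t in a..b, fderiv ℝ (fderiv ℝ F) (β t + s • α t) (α t) (α t) := by
  have hF₁ := hF.continuous_fderiv (by norm_num)
  have := continuous_fderiv_fderiv hF
  rw [deriv_integral_comp_line (hF.of_le (by norm_num)) hα hβ]
  exact (hasDerivAt_intervalIntegral
    (f' := fun s t => fderiv ℝ (fderiv ℝ F) (β t + s • α t) (α t) (α t))
    (fun s => by fun_prop) (by fun_prop)
    (fun s t => hasDerivAt_fderiv_apply_const hF (hasDerivAt_add_smul (β t) (α t) s) (α t))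
    a b s).deriv

/-- The Laplacian of `F` at `p` in the plane spanned by `v` and `w`, computed as if `v` and `w` were
orthonormal. -/
noncomputable def planeLaplacian (v w : E) (F : E → ℝ) (p : E) : ℝ :=
  fderiv ℝ (fderiv ℝ F) p v v + fderiv ℝ (fderiv ℝ F) p w w

lemma planeLaplacian_smul (c : ℝ) (v w : E) (F : E → ℝ) :
    planeLaplacian (c • v) (c • w) F = c ^ 2 • planeLaplacian v w F := by
  ext1 p
  simp only [planeLaplacian, map_smul, smul_apply, Pi.smul_apply, smul_eq_mul]
  ring

end SecondDerivative

section Ellipse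

variable {E : Type*} [NormedAddCommGroup E] [NormedSpace ℝ E] {F : E → ℝ}

/-- The ellipse centred at the origin with conjugate radii `v` and `w`, parametrized so that it is
the circle of radius `R` when `v` and `w` are orthogonal of length `R`. -/
noncomputable def ellipse (v w : E) (θ : ℝ) : E := cos θ • v + sin θ • w

/-- The integral of `F` over the ellipse centred at `p` with conjugate radii `v` and `w`, with
respect to the angle rather than to arc length. -/
noncomputable def ellipseIntegral (v w : E) (F : E → ℝ) (p : E) : ℝ :=
  ∫ θ in (0 : ℝ)..2 * π, F (p + ellipse v w θ)

lemma continuous_ellipse (v w : E) : Continuous (ellipse v w) := by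
  unfold ellipse; fun_prop

lemma ellipse_smul (c : ℝ) (v w : E) (θ : ℝ) : ellipse (c • v) (c • w) θ = c • ellipse v w θ := by
  unfold ellipse; module

lemma ellipse_two_pi (v w : E) : ellipse v w (2 * π) = ellipse v w 0 := by
  simp [ellipse]

lemma hasDerivAt_ellipse (v w : E) (θ : ℝ) : HasDerivAt (ellipse v w) (ellipse w (-v) θ) θ := by
  refine (((hasDerivAt_cos θ).smul_const v).add
    ((hasDerivAt_sin θ).smul_const w)).congr_deriv ?_
  unfold ellipse; module

lemma bilin_ellipse_add_bilin_deriv (B : E →L[ℝ] E →L[ℝ] ℝ) (v w : E) (θ : ℝ) :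
    B (ellipse v w θ) (ellipse v w θ) + B (ellipse w (-v) θ) (ellipse w (-v) θ) =
      B v v + B w w := by
  simp only [ellipse, map_add, map_smul, map_neg, add_apply, smul_apply, neg_apply, smul_eq_mul]
  linear_combination (B v v + B w w) * sin_sq_add_cos_sq θ

lemma ellipseIntegral_comm (hF : Continuous F) (v w v' w' p : E) :
    ellipseIntegral v w (ellipseIntegral v' w' F) p =
      ellipseIntegral v' w' (ellipseIntegral v w F) p := by
  have h := continuous_ellipse v w
  have h' := continuous_ellipse v' w'
  have hcont : Continuous fun q : ℝ × ℝ => F (p + ellipse v w q.1 + ellipse v' w' q.2) := by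
    fun_prop
  unfold ellipseIntegral
  have hswap := intervalIntegral_intervalIntegral_swap
    (F := fun θ φ => F (p + ellipse v w θ + ellipse v' w' φ))
    ((hcont.continuousOn.integrableOn_compact (isCompact_uIcc.prod isCompact_uIcc)).mono_set
      (prod_mono (uIoc_subset_uIcc (a := 0) (b := 2 * π)) (uIoc_subset_uIcc (a := 0) (b := 2 * π))))
  simpa only [add_right_comm] using hswap

lemma contDiff_ellipseIntegral_param {H : Type*} [NormedAddCommGroup H] [NormedSpace ℝ H] {n : ℕ∞}
    {g : H → E → ℝ} (hg : ContDiff ℝ n fun q : H × E => g q.1 q.2) {v w p : H → E}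
    (hv : ContDiff ℝ n v) (hw : ContDiff ℝ n w) (hp : ContDiff ℝ n p) :
    ContDiff ℝ n fun x => ellipseIntegral (v x) (w x) (g x) (p x) := by
  refine contDiff_intervalIntegral
    (hg.comp (?_ : ContDiff ℝ n fun q : H × ℝ => (q.1, p q.1 + ellipse (v q.1) (w q.1) q.2)))
    0 (2 * π)
  unfold ellipse
  fun_prop

lemma contDiff_ellipseIntegral {n : ℕ∞} (hF : ContDiff ℝ n F) (v w : E) :
    ContDiff ℝ n (ellipseIntegral v w F) :=
  contDiff_ellipseIntegral_param (g := fun _ => F) (hF.comp contDiff_snd) contDiff_const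
    contDiff_const contDiff_id

lemma planeLaplacian_ellipseIntegral (hF : ContDiff ℝ 2 F) (v w v' w' : E) :
    planeLaplacian v w (ellipseIntegral v' w' F) =
      ellipseIntegral v' w' (planeLaplacian v w F) := by
  ext1 p
  have hS : ContDiff ℝ 2 (ellipseIntegral v' w' F) := contDiff_ellipseIntegral hF v' w'
  have hell := continuous_ellipse v' w'
  have := continuous_fderiv_fderiv hF
  have hsecond (z : E) : fderiv ℝ (fderiv ℝ (ellipseIntegral v' w' F)) p z z =
      ∫ θ in (0 : ℝ)..2 * π, fderiv ℝ (fderiv ℝ F) (p + ellipse v' w' θ) z z := by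
    have h := deriv_deriv_integral_comp_line hF (continuous_const (y := z))
      (hell.const_add p) 0 (2 * π) 0
    have h' := deriv_deriv_comp_line hS (hasDerivAt_add_smul p z) 0
    simp only [ellipseIntegral, add_right_comm p _ (ellipse _ _ _), zero_smul, add_zero] at h h' ⊢
    exact h'.symm.trans h
  unfold planeLaplacian
  rw [hsecond, hsecond, ← intervalIntegral.integral_add]
  · rfl
  all_goals exact Continuous.intervalIntegrable (by fun_prop) _ _

lemma continuous_planeLaplacian (hF : ContDiff ℝ 2 F) (v w : E) :
    Continuous (planeLaplacian v w F) := by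
  have := continuous_fderiv_fderiv hF
  unfold planeLaplacian
  fun_prop

end Ellipse

section Darboux

variable {E : Type*} [NormedAddCommGroup E] [NormedSpace ℝ E] {F : E → ℝ}

/-- The Bessel operator `f'' + (k / a) f'`, multiplied by `a` so that it makes sense at `a = 0`. -/
noncomputable def besselOp (k : ℕ) (f : ℝ → ℝ) (a : ℝ) : ℝ := a * deriv (deriv f) a + k * deriv f a

lemma besselOp_sub {f g : ℝ → ℝ} (hf : ContDiff ℝ 2 f) (hg : ContDiff ℝ 2 g) (k : ℕ) (a : ℝ) :
    besselOp k (fun t => f t - g t) a = besselOp k f a - besselOp k g a := by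
  have hderiv : (deriv fun t => f t - g t) = fun t => deriv f t - deriv g t := by
    ext1 t
    exact deriv_fun_sub (hf.differentiable (by norm_num) t) (hg.differentiable (by norm_num) t)
  have hf' : Differentiable ℝ (deriv f) := hf.differentiable_deriv_two
  have hg' : Differentiable ℝ (deriv g) := hg.differentiable_deriv_two
  unfold besselOp
  rw [hderiv, deriv_fun_sub (hf' a) (hg' a)]
  ring

-- Integrate `d/dθ DF(p + a c(θ)) c'(θ)` over a period, using `c'' = -c`.
lemma integral_fderiv_ellipse (hF : ContDiff ℝ 2 F) (v w p : E) (a : ℝ) :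
    ∫ θ in (0 : ℝ)..2 * π, fderiv ℝ F (p + a • ellipse v w θ) (ellipse v w θ) =
      a * ∫ θ in (0 : ℝ)..2 * π, fderiv ℝ (fderiv ℝ F) (p + a • ellipse v w θ)
        (ellipse w (-v) θ) (ellipse w (-v) θ) := by
  have hc := continuous_ellipse v w
  have hc' := continuous_ellipse w (-v)
  have hF₁ := hF.continuous_fderiv (by norm_num)
  have := continuous_fderiv_fderiv hF
  have hderiv (θ : ℝ) : HasDerivAt
      (fun θ => fderiv ℝ F (p + a • ellipse v w θ) (ellipse w (-v) θ))
      (a * fderiv ℝ (fderiv ℝ F) (p + a • ellipse v w θ) (ellipse w (-v) θ) (ellipse w (-v) θ) -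
        fderiv ℝ F (p + a • ellipse v w θ) (ellipse v w θ)) θ := by
    have hneg : ellipse (-v) (-w) θ = -ellipse v w θ := by
      unfold ellipse; module
    refine (hasDerivAt_fderiv_apply hF (((hasDerivAt_ellipse v w θ).const_smul a).const_add p)
      (hasDerivAt_ellipse w (-v) θ)).congr_deriv ?_
    simp only [hneg, map_smul, map_neg, smul_apply, Pi.smul_apply, smul_eq_mul, sub_eq_add_neg]
  have hFTC := integral_eq_sub_of_hasDerivAt (a := 0) (b := 2 * π) (fun θ _ => hderiv θ)
    (Continuous.intervalIntegrable (by fun_prop) _ _)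
  rw [ellipse_two_pi, ellipse_two_pi, sub_self, intervalIntegral.integral_sub
    (Continuous.intervalIntegrable (by fun_prop) _ _)
    (Continuous.intervalIntegrable (by fun_prop) _ _), intervalIntegral.integral_const_mul] at hFTC
  exact (sub_eq_zero.1 hFTC).symm

lemma besselOp_ellipseIntegral (hF : ContDiff ℝ 2 F) (v w p : E) (a : ℝ) :
    besselOp 1 (fun t => ellipseIntegral (t • v) (t • w) F p) a =
      a * ellipseIntegral (a • v) (a • w) (planeLaplacian v w F) p := by
  have hc := continuous_ellipse v w
  have hc' := continuous_ellipse w (-v)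
  have := continuous_fderiv_fderiv hF
  simp only [besselOp, ellipseIntegral, ellipse_smul]
  rw [deriv_deriv_integral_comp_line hF hc continuous_const,
    deriv_integral_comp_line (hF.of_le (by norm_num)) hc continuous_const]
  simp only [Nat.cast_one, one_mul]
  rw [integral_fderiv_ellipse hF, ← mul_add, ← intervalIntegral.integral_add
    (Continuous.intervalIntegrable (by fun_prop) _ _)
    (Continuous.intervalIntegrable (by fun_prop) _ _)]
  simp only [bilin_ellipse_add_bilin_deriv, planeLaplacian]

end Darboux

section EulerPoissonDarboux

variable {k : ℕ} {u u' : ℝ × ℝ → ℝ}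

/-- The Euler–Poisson–Darboux equation `u_aa + (k / a) u_a = u_bb + (k / b) u_b`, multiplied by
`a b` so that it makes sense on the axes. -/
def IsEulerPoissonDarboux (k : ℕ) (u : ℝ × ℝ → ℝ) : Prop :=
  ∀ a b, b * besselOp k (fun t => u (t, b)) a = a * besselOp k (fun t => u (a, t)) b

lemma IsEulerPoissonDarboux.swap (h : IsEulerPoissonDarboux k u) :
    IsEulerPoissonDarboux k fun q => u q.swap :=
  fun a b => (h b a).symm

lemma IsEulerPoissonDarboux.sub (hu : ContDiff ℝ 2 u) (hu' : ContDiff ℝ 2 u')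
    (h : IsEulerPoissonDarboux k u) (h' : IsEulerPoissonDarboux k u') :
    IsEulerPoissonDarboux k fun q => u q - u' q := by
  intro a b
  rw [besselOp_sub (by fun_prop) (by fun_prop), besselOp_sub (by fun_prop) (by fun_prop)]
  linear_combination h a b - h' a b

lemma IsEulerPoissonDarboux.fderiv_eq (hu : ContDiff ℝ 2 u) (h : IsEulerPoissonDarboux k u)
    (a b : ℝ) :
    b * (a * fderiv ℝ (fderiv ℝ u) (a, b) (1, 0) (1, 0) + k * fderiv ℝ u (a, b) (1, 0)) =
      a * (b * fderiv ℝ (fderiv ℝ u) (a, b) (0, 1) (0, 1) + k * fderiv ℝ u (a, b) (0, 1)) := by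
  have hfst (t : ℝ) : HasDerivAt (fun t : ℝ => (t, b)) (1, 0) t :=
    (hasDerivAt_id t).prodMk (hasDerivAt_const t b)
  have hsnd (t : ℝ) : HasDerivAt (fun t : ℝ => (a, t)) (0, 1) t :=
    (hasDerivAt_const t a).prodMk (hasDerivAt_id t)
  have hu₁ : ContDiff ℝ 1 u := hu.of_le (by norm_num)
  have hab := h a b
  unfold besselOp at hab
  rwa [deriv_deriv_comp_line hu hfst, deriv_deriv_comp_line hu hsnd,
    deriv_comp_line hu₁ hfst, deriv_comp_line hu₁ hsnd] at hab

/-- The energy density of `u` in the coordinates `(a, s)`, `b = a s`, of the triangle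
`0 ≤ b ≤ a`; the weight `a ^ (k + 1) * s ^ k` is `b ^ k` times the Jacobian `a`. -/
noncomputable def energyDensity (k : ℕ) (u : ℝ × ℝ → ℝ) (q : ℝ × ℝ) : ℝ :=
  q.1 ^ (k + 1) * q.2 ^ k *
    (fderiv ℝ u (q.1, q.1 * q.2) (1, 0) ^ 2 + fderiv ℝ u (q.1, q.1 * q.2) (0, 1) ^ 2)

/-- The energy flux of `u` in the direction of `s`: along solutions of the Euler–Poisson–Darboux
equation, `∂_a energyDensity - ∂_s energyFlux` is a nonpositive multiple of `u_a ^ 2`. -/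
noncomputable def energyFlux (k : ℕ) (u : ℝ × ℝ → ℝ) (q : ℝ × ℝ) : ℝ :=
  q.1 ^ k * q.2 ^ k *
    (q.2 * (fderiv ℝ u (q.1, q.1 * q.2) (1, 0) ^ 2 + fderiv ℝ u (q.1, q.1 * q.2) (0, 1) ^ 2) +
      2 * (fderiv ℝ u (q.1, q.1 * q.2) (1, 0) * fderiv ℝ u (q.1, q.1 * q.2) (0, 1)))

lemma contDiff_energyDensity (hu : ContDiff ℝ 2 u) : ContDiff ℝ 1 (energyDensity k u) := by
  have : ContDiff ℝ 1 (fderiv ℝ u) := hu.fderiv_right (by norm_num)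
  unfold energyDensity
  fun_prop

lemma contDiff_energyFlux (hu : ContDiff ℝ 2 u) : ContDiff ℝ 1 (energyFlux k u) := by
  have : ContDiff ℝ 1 (fderiv ℝ u) := hu.fderiv_right (by norm_num)
  unfold energyFlux
  fun_prop

lemma fderiv_energyDensity (hu : ContDiff ℝ 2 u) (a s : ℝ) :
    fderiv ℝ (energyDensity (k + 1) u) (a, s) (1, 0) =
      (k + 2) * a ^ (k + 1) * s ^ (k + 1) *
        (fderiv ℝ u (a, a * s) (1, 0) ^ 2 + fderiv ℝ u (a, a * s) (0, 1) ^ 2) +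
      2 * a ^ (k + 2) * s ^ (k + 1) *
        (fderiv ℝ u (a, a * s) (1, 0) * fderiv ℝ (fderiv ℝ u) (a, a * s) (1, s) (1, 0) +
          fderiv ℝ u (a, a * s) (0, 1) * fderiv ℝ (fderiv ℝ u) (a, a * s) (1, s) (0, 1)) := by
  have hline : HasDerivAt (fun t : ℝ => (t, s)) (1, 0) a :=
    (hasDerivAt_id a).prodMk (hasDerivAt_const a s)
  have hray : HasDerivAt (fun t : ℝ => (t, t * s)) (1, s) a := by
    simpa using (hasDerivAt_id a).prodMk ((hasDerivAt_id a).mul_const s)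
  have hux := hasDerivAt_fderiv_apply_const hu hray (1, 0)
  have huy := hasDerivAt_fderiv_apply_const hu hray (0, 1)
  have hchain := (((contDiff_energyDensity (k := k + 1) hu).differentiable (by norm_num)
    (a, s)).hasFDerivAt).comp_hasDerivAt a hline
  refine hchain.unique ((((hasDerivAt_pow (k + 2) a).mul_const (s ^ (k + 1))).mul
    ((hux.pow 2).add (huy.pow 2))).congr_deriv ?_)
  simp only [Nat.cast_add, Nat.cast_ofNat, Nat.add_one_sub_one, Pi.add_apply, Pi.pow_apply, pow_one]
  ring

lemma fderiv_energyFlux (hu : ContDiff ℝ 2 u) (a s : ℝ) :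
    fderiv ℝ (energyFlux (k + 1) u) (a, s) (0, 1) =
      a ^ (k + 1) * s ^ k *
        ((k + 2) * s * (fderiv ℝ u (a, a * s) (1, 0) ^ 2 + fderiv ℝ u (a, a * s) (0, 1) ^ 2) +
          2 * (k + 1) * (fderiv ℝ u (a, a * s) (1, 0) * fderiv ℝ u (a, a * s) (0, 1))) +
      2 * a ^ (k + 2) * s ^ (k + 1) *
        (fderiv ℝ (fderiv ℝ u) (a, a * s) (0, 1) (1, 0) *
            (s * fderiv ℝ u (a, a * s) (1, 0) + fderiv ℝ u (a, a * s) (0, 1)) +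
          fderiv ℝ (fderiv ℝ u) (a, a * s) (0, 1) (0, 1) *
            (s * fderiv ℝ u (a, a * s) (0, 1) + fderiv ℝ u (a, a * s) (1, 0))) := by
  have hline : HasDerivAt (fun t : ℝ => (a, t)) (0, 1) s :=
    (hasDerivAt_const s a).prodMk (hasDerivAt_id s)
  have hseg : HasDerivAt (fun t : ℝ => (a, a * t)) (a • (0, 1)) s := by
    simpa using (hasDerivAt_const s a).prodMk ((hasDerivAt_id s).const_mul a)
  have hux := hasDerivAt_fderiv_apply_const hu hseg (1, 0)
  have huy := hasDerivAt_fderiv_apply_const hu hseg (0, 1)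
  rw [map_smul, smul_apply, smul_eq_mul] at hux huy
  have hchain := (((contDiff_energyFlux (k := k + 1) hu).differentiable (by norm_num)
    (a, s)).hasFDerivAt).comp_hasDerivAt s hline
  refine hchain.unique ((((hasDerivAt_pow (k + 1) s).const_mul (a ^ (k + 1))).mul
    (((hasDerivAt_id s).mul ((hux.pow 2).add (huy.pow 2))).add
      ((hux.mul huy).const_mul 2))).congr_deriv ?_)
  simp only [Nat.cast_add, Nat.cast_one, add_tsub_cancel_right, Pi.mul_apply, Pi.add_apply, id_eq,
    Pi.pow_apply, one_mul, Nat.cast_ofNat, Nat.add_one_sub_one, pow_one]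
  ring

lemma IsEulerPoissonDarboux.fderiv_energyDensity_eq (hu : ContDiff ℝ 2 u)
    (h : IsEulerPoissonDarboux (k + 1) u) (a s : ℝ) :
    fderiv ℝ (energyDensity (k + 1) u) (a, s) (1, 0) =
      fderiv ℝ (energyFlux (k + 1) u) (a, s) (0, 1) -
        2 * (k + 1) * a ^ (k + 1) * s ^ (k + 1) * fderiv ℝ u (a, a * s) (1, 0) ^ 2 := by
  have hsymm : fderiv ℝ (fderiv ℝ u) (a, a * s) (1, 0) (0, 1) =
      fderiv ℝ (fderiv ℝ u) (a, a * s) (0, 1) (1, 0) :=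
    (hu.contDiffAt.isSymmSndFDerivAt (by simp)).eq _ _
  have hray (z : ℝ × ℝ) : fderiv ℝ (fderiv ℝ u) (a, a * s) (1, s) z =
      fderiv ℝ (fderiv ℝ u) (a, a * s) (1, 0) z +
        s * fderiv ℝ (fderiv ℝ u) (a, a * s) (0, 1) z := by
    have hdecomp : ((1, s) : ℝ × ℝ) = (1, 0) + s • (0, 1) := by simp
    simp only [hdecomp, map_add, map_smul, add_apply, smul_apply, smul_eq_mul]
  have heq := h.fderiv_eq hu a (a * s)
  push_cast at heq
  rw [fderiv_energyDensity hu, fderiv_energyFlux hu, hray, hray, hsymm]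
  linear_combination 2 * a ^ k * s ^ k * fderiv ℝ u (a, a * s) (1, 0) * heq

lemma energyDensity_nonneg {q : ℝ × ℝ} (hq : 0 ≤ q) : 0 ≤ energyDensity k u q := by
  have ha : 0 ≤ q.1 := hq.1
  have hs : 0 ≤ q.2 := hq.2
  unfold energyDensity
  positivity

lemma energyFlux_one_of_diagonal (hu : ContDiff ℝ 1 u) (hdiag : ∀ a, u (a, a) = 0) (a : ℝ) :
    energyFlux k u (a, 1) = 0 := by
  have hline (t : ℝ) : HasDerivAt (fun t : ℝ => (t, t)) (1, 1) t :=
    (hasDerivAt_id t).prodMk (hasDerivAt_id t)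
  have hsum : fderiv ℝ u (a, a) (1, 0) + fderiv ℝ u (a, a) (0, 1) = 0 := by
    have hderiv := congrFun (deriv_comp_line hu hline) a
    simp only [hdiag, deriv_const] at hderiv
    rw [← map_add, Prod.mk_add_mk, add_zero, zero_add, ← hderiv]
  simp only [energyFlux, mul_one, one_pow, one_mul]
  linear_combination a ^ k * (fderiv ℝ u (a, a) (1, 0) + fderiv ℝ u (a, a) (0, 1)) * hsum

lemma IsEulerPoissonDarboux.energyDensity_eq_zero (hu : ContDiff ℝ 2 u)
    (h : IsEulerPoissonDarboux (k + 1) u) (hdiag : ∀ a, u (a, a) = 0) {a s : ℝ} (ha : 0 ≤ a)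
    (hs : s ∈ Icc 0 1) : energyDensity (k + 1) u (a, s) = 0 := by
  have hanti : AntitoneOn (fun a => ∫ s in (0 : ℝ)..1, energyDensity (k + 1) u (a, s)) (Ici 0) := by
    refine antitoneOn_intervalIntegral_of_fderiv_le (contDiff_energyDensity hu)
      (contDiff_energyFlux (k := k + 1) hu) zero_le_one (convex_Ici 0)
      (fun a ha s hs => ?_) fun a _ => ?_
    · have ha₀ : 0 ≤ a := ha
      have hs₀ : 0 ≤ s := hs.1
      rw [h.fderiv_energyDensity_eq hu, sub_le_self_iff]
      positivity
    · rw [energyFlux_one_of_diagonal (hu.of_le (by norm_num)) hdiag]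
      simp [energyFlux]
  have hzero : ∫ s in (0 : ℝ)..1, energyDensity (k + 1) u (0, s) = 0 := by
    simp [energyDensity]
  have hcont : Continuous fun s => energyDensity (k + 1) u (a, s) :=
    (contDiff_energyDensity hu).continuous.comp (by fun_prop)
  refine ((energyDensity_nonneg ⟨ha, hs.1⟩).eq_of_not_lt fun hpos => ?_).symm
  have hint : 0 < ∫ s in (0 : ℝ)..1, energyDensity (k + 1) u (a, s) :=
    intervalIntegral.integral_pos zero_lt_one hcont.continuousOn
      (fun t ht => energyDensity_nonneg ⟨ha, ht.1.le⟩) ⟨s, hs, hpos⟩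
  exact hint.not_ge ((hanti self_mem_Ici ha ha).trans_eq hzero)

lemma IsEulerPoissonDarboux.fderiv_snd_eq_zero (hu : ContDiff ℝ 2 u)
    (h : IsEulerPoissonDarboux (k + 1) u) (hdiag : ∀ a, u (a, a) = 0) {a b : ℝ} (hb : 0 < b)
    (hba : b ≤ a) : fderiv ℝ u (a, b) (0, 1) = 0 := by
  have ha : 0 < a := hb.trans_le hba
  have hzero := h.energyDensity_eq_zero hu hdiag ha.le
    ⟨(div_pos hb ha).le, (div_le_one ha).2 hba⟩
  simp only [energyDensity, mul_div_cancel₀ b ha.ne'] at hzero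
  have hsq := (mul_eq_zero.1 hzero).resolve_left (by positivity)
  exact pow_eq_zero_iff two_ne_zero |>.1
    ((add_eq_zero_iff_of_nonneg (sq_nonneg _) (sq_nonneg _)).1 hsq).2

lemma IsEulerPoissonDarboux.eq_zero_of_diagonal (hu : ContDiff ℝ 2 u)
    (h : IsEulerPoissonDarboux (k + 1) u) (hdiag : ∀ a, u (a, a) = 0) {a b : ℝ} (hb : 0 ≤ b)
    (hba : b ≤ a) : u (a, b) = 0 := by
  rcases hba.eq_or_lt with rfl | hlt
  · exact hdiag b
  have hline (t : ℝ) : HasDerivAt (fun t : ℝ => (a, t)) (0, 1) t :=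
    (hasDerivAt_const t a).prodMk (hasDerivAt_id t)
  obtain ⟨t, ht, hslope⟩ := exists_hasDerivAt_eq_slope (fun t => u (a, t)) _ hlt
    (hu.continuous.comp (by fun_prop)).continuousOn
    fun t _ => (hu.differentiable (by norm_num) (a, t)).hasFDerivAt.comp_hasDerivAt t (hline t)
  rw [h.fderiv_snd_eq_zero hu hdiag (hb.trans_lt ht.1) ht.2.le, hdiag, zero_sub] at hslope
  simpa [(sub_pos.2 hlt).ne'] using hslope.symm

lemma IsEulerPoissonDarboux.apply_comm (hu : ContDiff ℝ 2 u)
    (h : IsEulerPoissonDarboux (k + 1) u) {a b : ℝ} (ha : 0 ≤ a) (hb : 0 ≤ b) :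
    u (a, b) = u (b, a) := by
  wlog hba : b ≤ a generalizing a b
  · exact (this hb ha (le_of_not_ge hba)).symm
  have hswap : ContDiff ℝ 2 fun q : ℝ × ℝ => u q.swap :=
    hu.comp (contDiff_snd.prodMk contDiff_fst)
  exact sub_eq_zero.1 ((h.sub hu hswap h.swap).eq_zero_of_diagonal (hu.sub hswap)
    (fun a => sub_self _) hb hba)

end EulerPoissonDarboux

section DoubleEllipseIntegral

variable {E : Type*} [NormedAddCommGroup E] [NormedSpace ℝ E] {F : E → ℝ}

/-- The integral of `F` over the product of the ellipses at `p` with conjugate radii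
`q.1 • v, q.1 • w` and `q.2 • v', q.2 • w'`, as a function of the scaling factors `q`. -/
noncomputable def doubleEllipseIntegral (v w v' w' : E) (F : E → ℝ) (p : E) (q : ℝ × ℝ) : ℝ :=
  ellipseIntegral (q.1 • v) (q.1 • w) (ellipseIntegral (q.2 • v') (q.2 • w') F) p

lemma contDiff_doubleEllipseIntegral (hF : ContDiff ℝ 2 F) (v w v' w' p : E) :
    ContDiff ℝ 2 (doubleEllipseIntegral v w v' w' F p) := by
  have hinner : ContDiff ℝ 2 fun z : (ℝ × ℝ) × E =>
      ellipseIntegral (z.1.2 • v') (z.1.2 • w') F z.2 :=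
    contDiff_ellipseIntegral_param (g := fun _ => F) (hF.comp contDiff_snd) (by fun_prop)
      (by fun_prop) contDiff_snd
  exact contDiff_ellipseIntegral_param
    (g := fun q : ℝ × ℝ => ellipseIntegral (q.2 • v') (q.2 • w') F) hinner (by fun_prop)
    (by fun_prop) contDiff_const

lemma isEulerPoissonDarboux_doubleEllipseIntegral (hF : ContDiff ℝ 2 F) {v w v' w' : E}
    (hΔ : planeLaplacian v w F = planeLaplacian v' w' F) (p : E) :
    IsEulerPoissonDarboux 1 (doubleEllipseIntegral v w v' w' F p) := by
  intro a b
  simp only [doubleEllipseIntegral, ellipseIntegral_comm hF.continuous (a • v)]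
  rw [besselOp_ellipseIntegral (contDiff_ellipseIntegral hF _ _),
    besselOp_ellipseIntegral (contDiff_ellipseIntegral hF _ _),
    planeLaplacian_ellipseIntegral hF, planeLaplacian_ellipseIntegral hF,
    ellipseIntegral_comm (continuous_planeLaplacian hF v w), hΔ]
  ring

lemma doubleEllipseIntegral_one_zero (v w v' w' : E) (F : E → ℝ) (p : E) :
    doubleEllipseIntegral v w v' w' F p (1, 0) = 2 * π * ellipseIntegral v w F p := by
  simp [doubleEllipseIntegral, ellipseIntegral, ellipse]

lemma doubleEllipseIntegral_zero_one (v w v' w' : E) (F : E → ℝ) (p : E) :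
    doubleEllipseIntegral v w v' w' F p (0, 1) = 2 * π * ellipseIntegral v' w' F p := by
  simp [doubleEllipseIntegral, ellipseIntegral, ellipse]

end DoubleEllipseIntegral

lemma planeLaplacian_eq_of_ultrahyperbolic {r : ℝ → ℝ → ℝ → ℝ → ℝ}
    (hr : ContDiff ℝ 2 fun p : ℝ × ℝ × ℝ × ℝ => r p.1 p.2.1 p.2.2.1 p.2.2.2)
    (huh : ∀ ξ₁ ξ₂ ξ₃ ξ₄ : ℝ,
      deriv (fun t => deriv (fun s => r s ξ₂ ξ₃ ξ₄) t) ξ₁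
        - deriv (fun t => deriv (fun s => r ξ₁ s ξ₃ ξ₄) t) ξ₂
        - deriv (fun t => deriv (fun s => r ξ₁ ξ₂ s ξ₄) t) ξ₃
        + deriv (fun t => deriv (fun s => r ξ₁ ξ₂ ξ₃ s) t) ξ₄ = 0) :
    planeLaplacian (1, 0, 0, 0) (0, 0, 0, 1) (fun p => r p.1 p.2.1 p.2.2.1 p.2.2.2) =
      planeLaplacian (0, 1, 0, 0) (0, 0, 1, 0) (fun p => r p.1 p.2.1 p.2.2.1 p.2.2.2) := by
  ext ⟨x, y, z, w⟩
  have h₁ := deriv_deriv_comp_line hr (γ := fun s => (s, y, z, w)) (v := (1, 0, 0, 0)) (fun t =>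
    (hasDerivAt_id t).prodMk (hasDerivAt_const t (y, z, w))) x
  have h₂ := deriv_deriv_comp_line hr (γ := fun s => (x, s, z, w)) (v := (0, 1, 0, 0)) (fun t =>
    (hasDerivAt_const t x).prodMk ((hasDerivAt_id t).prodMk (hasDerivAt_const t (z, w)))) y
  have h₃ := deriv_deriv_comp_line hr (γ := fun s => (x, y, s, w)) (v := (0, 0, 1, 0)) (fun t =>
    (hasDerivAt_const t x).prodMk ((hasDerivAt_const t y).prodMk
      ((hasDerivAt_id t).prodMk (hasDerivAt_const t w)))) z
  have h₄ := deriv_deriv_comp_line hr (γ := fun s => (x, y, z, s)) (v := (0, 0, 0, 1)) (fun t =>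
    (hasDerivAt_const t x).prodMk ((hasDerivAt_const t y).prodMk
      ((hasDerivAt_const t z).prodMk (hasDerivAt_id t)))) w
  unfold planeLaplacian
  linear_combination huh x y z w - h₁ + h₂ + h₃ - h₄

end Asgeirsson

open Asgeirsson in
theorem asgeirsson_first_general {E : Type*} [NormedAddCommGroup E] [NormedSpace ℝ E] {F : E → ℝ}
    (hF : ContDiff ℝ 2 F) {v w v' w' : E}
    (hΔ : planeLaplacian v w F = planeLaplacian v' w' F) (p : E) :
    ellipseIntegral v w F p = ellipseIntegral v' w' F p := by
  have hcomm := (isEulerPoissonDarboux_doubleEllipseIntegral hF hΔ p).apply_comm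
    (contDiff_doubleEllipseIntegral hF v w v' w' p) zero_le_one le_rfl
  rw [doubleEllipseIntegral_one_zero, doubleEllipseIntegral_zero_one] at hcomm
  exact mul_left_cancel₀ two_pi_pos.ne' hcomm

/-- Asgeirsson's first theorem: if `r : ℝ⁴ → ℝ` is C² and satisfies the
ultrahyperbolic equation on all of `ℝ⁴`, then for every point and every radius `R ≥ 0`
the mean of `r` over the circle of radius `R` in the `(ξ₁,ξ₄)`-plane equals the mean
over the circle of the same radius in the `(ξ₂,ξ₃)`-plane. -/
theorem asgeirsson_first
    (r : ℝ → ℝ → ℝ → ℝ → ℝ)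
    (hr : ContDiff ℝ 2 (fun p : ℝ × ℝ × ℝ × ℝ => r p.1 p.2.1 p.2.2.1 p.2.2.2))
    (huh : ∀ ξ₁ ξ₂ ξ₃ ξ₄ : ℝ,
      deriv (fun t => deriv (fun s => r s ξ₂ ξ₃ ξ₄) t) ξ₁
        - deriv (fun t => deriv (fun s => r ξ₁ s ξ₃ ξ₄) t) ξ₂
        - deriv (fun t => deriv (fun s => r ξ₁ ξ₂ s ξ₄) t) ξ₃
        + deriv (fun t => deriv (fun s => r ξ₁ ξ₂ ξ₃ s) t) ξ₄ = 0) :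
    ∀ (ξ₁ ξ₂ ξ₃ ξ₄ R : ℝ), 0 ≤ R →
      (∫ θ in (0:ℝ)..(2 * π), r (ξ₁ + R * cos θ) ξ₂ ξ₃ (ξ₄ + R * sin θ))
        = ∫ θ in (0:ℝ)..(2 * π), r ξ₁ (ξ₂ + R * cos θ) (ξ₃ + R * sin θ) ξ₄ := by
  intro ξ₁ ξ₂ ξ₃ ξ₄ R _
  have hΔ := congrArg (R ^ 2 • ·) (Asgeirsson.planeLaplacian_eq_of_ultrahyperbolic hr huh)
  simp only [← Asgeirsson.planeLaplacian_smul] at hΔ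
  simpa [Asgeirsson.ellipseIntegral, Asgeirsson.ellipse, mul_comm] using
    asgeirsson_first_general hr hΔ (ξ₁, ξ₂, ξ₃, ξ₄)
end

section
/- (Asgeirsson's second theorem.) Let r : ℝ⁴ → ℝ be twice continuously differentiable and satisfy the ultrahyperbolic equation (∂²_{ξ₁ξ₁} − ∂²_{ξ₂ξ₂} − ∂²_{ξ₃ξ₃} + ∂²_{ξ₄ξ₄}) r = 0 on all of ℝ⁴. Then for every (ξ₁, ξ₂, ξ₃, ξ₄) ∈ ℝ⁴ and all R₁, R₂ ≥ 0, ∫₀^{2π} ∫₀^{2π} r(ξ₁ + R₁ cos θ₁, ξ₂ + R₂ cos θ₂, ξ₃ + R₂ sin θ₂, ξ₄ + R₁ sin θ₁) dθ₁ dθ₂ = ∫₀^{2π} ∫₀^{2π} r(ξ₁ + R₂ cos θ₁, ξ₂ + R₁ cos θ₂, ξ₃ + R₁ sin θ₂, ξ₄ + R₂ sin θ₁) dθ₁ dθ₂; that is, the double integral over the pair of circles of radii (R₁, R₂) in the (ξ₁,ξ₄)- and (ξ₂,ξ₃)-planes equals the double integral with the two radii interchanged. -/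
open Real MeasureTheory intervalIntegral

/-!
Let `M (x, y)` be the integral of `f` over a product of two circles of radii `x` and `y`.
Integrating the Laplacian of each plane in polar coordinates removes the angular term, so the
equality of the two Laplacians becomes the Euler–Poisson–Darboux equation
`M_xx + M_x / x = M_yy + M_y / y`. This equation is invariant under `x ↔ y`, hence
`w (x, y) = M (x, y) - M (y, x)` solves it too and vanishes on the diagonal. The energy
`∫₀ˣ x y (w_x² + w_y²) dy` starts from `0` and is nonincreasing: its flux through the diagonal is
a multiple of `(w_x + w_y)² = 0`, and its flux through `y = 0` vanishes because of the weight. So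
`w_y = 0` for `0 < y ≤ x`, and `w` vanishes there. A rotation by `π` of either circle changes the
sign of its radius.
-/

section SecondDerivative

variable {V W F : Type*} [NormedAddCommGroup V] [NormedSpace ℝ V]
  [NormedAddCommGroup W] [NormedSpace ℝ W] [NormedAddCommGroup F] [NormedSpace ℝ F]
  {f : V → F}

theorem continuousLinearMap_apply_mk (L : ℝ × ℝ →L[ℝ] F) (a b : ℝ) :
    L (a, b) = a • L (1, 0) + b • L (0, 1) := by
  simp only [← map_smul, ← map_add, Prod.smul_mk, Prod.mk_add_mk, smul_eq_mul, mul_one, mul_zero,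
    add_zero, zero_add]

theorem contDiff_fderiv_apply_const {n : WithTop ℕ∞} (hf : ContDiff ℝ (n + 1) f) (v : V) :
    ContDiff ℝ n fun x => fderiv ℝ f x v :=
  (hf.fderiv_right le_rfl).clm_apply contDiff_const

theorem fderiv_fderiv_apply (hf : ContDiff ℝ 2 f) (x v w : V) :
    fderiv ℝ (fderiv ℝ f) x v w = fderiv ℝ (fun y => fderiv ℝ f y w) x v := by
  have hf' := (hf.fderiv_right (m := 1) le_rfl).differentiable one_ne_zero x
  simp [fderiv_clm_apply hf' (differentiableAt_const w)]

theorem hasDerivAt_fderiv_comp_apply (hf : ContDiff ℝ 2 f) {γ w : ℝ → V} {γ' w' : V} {t : ℝ}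
    (hγ : HasDerivAt γ γ' t) (hw : HasDerivAt w w' t) :
    HasDerivAt (fun s => fderiv ℝ f (γ s) (w s))
      (fderiv ℝ (fderiv ℝ f) (γ t) γ' (w t) + fderiv ℝ f (γ t) w') t :=
  (((hf.fderiv_right (m := 1) le_rfl).differentiable one_ne_zero
    (γ t)).hasFDerivAt.comp_hasDerivAt t hγ).clm_apply hw

theorem deriv_deriv_comp_line (hf : ContDiff ℝ 2 f) (x v : V) (t : ℝ) :
    deriv (fun t => deriv (fun s : ℝ => f (x + s • v)) t) t =
      fderiv ℝ (fderiv ℝ f) (x + t • v) v v := by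
  have hline (t : ℝ) : HasDerivAt (fun s : ℝ => x + s • v) v t := by
    simpa using ((hasDerivAt_id t).smul_const v).const_add x
  have hfst (t : ℝ) : deriv (fun s : ℝ => f (x + s • v)) t = fderiv ℝ f (x + t • v) v :=
    ((hf.differentiable two_ne_zero _).hasFDerivAt.comp_hasDerivAt t (hline t)).deriv
  simpa [hfst] using (hasDerivAt_fderiv_comp_apply hf (hline t) (hasDerivAt_const t v)).deriv

variable {g : W → F} {x v : V} {z d : W}

theorem fderiv_apply_eq_of_forall_line (hf : DifferentiableAt ℝ f x)
    (hg : DifferentiableAt ℝ g z) (h : ∀ s : ℝ, g (z + s • d) = f (x + s • v)) :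
    fderiv ℝ g z d = fderiv ℝ f x v := by
  simp only [← hf.lineDeriv_eq_fderiv, ← hg.lineDeriv_eq_fderiv, lineDeriv, h]

theorem fderiv_fderiv_apply_eq_of_forall_line (hf : ContDiff ℝ 2 f) (hg : ContDiff ℝ 2 g)
    (h : ∀ s : ℝ, g (z + s • d) = f (x + s • v)) :
    fderiv ℝ (fderiv ℝ g) z d d = fderiv ℝ (fderiv ℝ f) x v v := by
  have hline := deriv_deriv_comp_line hg z d 0
  simp only [h, deriv_deriv_comp_line hf, zero_smul, add_zero] at hline
  exact hline.symm

end SecondDerivative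

section ParametricIntegral

variable {E F : Type*} [NormedAddCommGroup E] [NormedSpace ℝ E]
  [NormedAddCommGroup F] [NormedSpace ℝ F]

theorem exists_nhds_forall_norm_le_of_isCompact {X Y : Type*} [TopologicalSpace X]
    [TopologicalSpace Y] {G : Type*} [SeminormedAddCommGroup G] {g : X × Y → G}
    (hg : Continuous g) (x : X) {K : Set Y} (hK : IsCompact K) :
    ∃ U ∈ nhds x, ∃ C, ∀ y ∈ U, ∀ t ∈ K, ‖g (y, t)‖ ≤ C := by
  obtain ⟨C, hC⟩ := (isCompact_singleton.prod hK).exists_bound_of_continuousOn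
    (s := {x} ×ˢ K) hg.continuousOn
  obtain ⟨U, V, hU, -, hxU, hKV, hUV⟩ := generalized_tube_lemma isCompact_singleton hK
    (isOpen_lt hg.norm continuous_const)
    (fun z hz => (hC z hz).trans_lt (lt_add_one C) : {x} ×ˢ K ⊆ {z | ‖g z‖ < C + 1})
  exact ⟨U, hU.mem_nhds (hxU rfl), C + 1, fun y hy t ht => (hUV ⟨hy, hKV ht⟩ : _ < _).le⟩

theorem hasFDerivAt_intervalIntegral_of_continuous {K : E → ℝ → F} {K' : E → ℝ → E →L[ℝ] F}
    (hK : ∀ x, Continuous (K x)) (hK' : Continuous fun z : E × ℝ => K' z.1 z.2)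
    (h : ∀ x t, HasFDerivAt (fun y => K y t) (K' x t) x) (a b : ℝ) (x : E) :
    HasFDerivAt (fun y => ∫ t in a..b, K y t) (∫ t in a..b, K' x t) x := by
  obtain ⟨U, hU, C, hC⟩ := exists_nhds_forall_norm_le_of_isCompact hK' x isCompact_uIcc
  exact intervalIntegral.hasFDerivAt_integral_of_dominated_of_fderiv_le
    (s := U) (bound := fun _ => C) hU
    (.of_forall fun y => (hK y).aestronglyMeasurable) ((hK x).intervalIntegrable _ _)
    (hK'.comp (.prodMk_right x)).aestronglyMeasurable
    (.of_forall fun t ht y hy => hC y hy t (Set.uIoc_subset_uIcc ht))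
    intervalIntegrable_const (.of_forall fun t _ y _ => h y t)

theorem hasDerivAt_intervalIntegral_of_continuous {K K' : ℝ → ℝ → F}
    (hK : ∀ x, Continuous (K x)) (hK' : Continuous fun z : ℝ × ℝ => K' z.1 z.2)
    (h : ∀ x t, HasDerivAt (fun y => K y t) (K' x t) x) (a b x : ℝ) :
    HasDerivAt (fun y => ∫ t in a..b, K y t) (∫ t in a..b, K' x t) x := by
  have hL : Continuous fun z : ℝ × ℝ => ContinuousLinearMap.toSpanSingleton ℝ (K' z.1 z.2) :=
    (ContinuousLinearMap.toSpanSingletonCLE (𝕜 := ℝ)).continuous.comp hK'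
  have hd := (hasFDerivAt_intervalIntegral_of_continuous hK hL
    (fun x t => (h x t).hasFDerivAt) a b x).hasDerivAt
  have hLx : Continuous fun t => ContinuousLinearMap.toSpanSingleton ℝ (K' x t) :=
    hL.comp (.prodMk_right x)
  rw [ContinuousLinearMap.intervalIntegral_apply (hLx.intervalIntegrable a b)] at hd
  simpa only [ContinuousLinearMap.toSpanSingleton_apply, one_smul] using hd

variable {K : E × ℝ → F}

theorem hasFDerivAt_intervalIntegral_of_contDiff (hK : ContDiff ℝ 1 K) (a b : ℝ) (x : E) :
    HasFDerivAt (fun y => ∫ t in a..b, K (y, t))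
      (∫ t in a..b, (fderiv ℝ K (x, t)).comp (ContinuousLinearMap.inl ℝ E ℝ)) x :=
  hasFDerivAt_intervalIntegral_of_continuous (K := fun y t => K (y, t))
    (K' := fun y t => (fderiv ℝ K (y, t)).comp (ContinuousLinearMap.inl ℝ E ℝ))
    (fun y => hK.continuous.comp (.prodMk_right y))
    ((hK.continuous_fderiv one_ne_zero).clm_comp continuous_const)
    (fun y t => (hK.differentiable one_ne_zero (y, t)).hasFDerivAt.comp y
      (hasFDerivAt_prodMk_left y t)) a b x

theorem fderiv_intervalIntegral_apply (hK : ContDiff ℝ 1 K) (a b : ℝ) (x v : E) :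
    fderiv ℝ (fun y => ∫ t in a..b, K (y, t)) x v = ∫ t in a..b, fderiv ℝ K (x, t) (v, 0) := by
  have hK' : Continuous fun t : ℝ =>
      (fderiv ℝ K (x, t)).comp (ContinuousLinearMap.inl ℝ E ℝ) :=
    ((hK.continuous_fderiv one_ne_zero).comp (.prodMk_right x)).clm_comp continuous_const
  rw [(hasFDerivAt_intervalIntegral_of_contDiff hK a b x).fderiv,
    ContinuousLinearMap.intervalIntegral_apply (hK'.intervalIntegrable a b)]
  rfl

theorem contDiff_intervalIntegral [FiniteDimensional ℝ E] {n : ℕ} (hK : ContDiff ℝ n K)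
    (a b : ℝ) : ContDiff ℝ n fun x => ∫ t in a..b, K (x, t) := by
  induction n generalizing K with
  | zero =>
    exact contDiff_zero.2 (continuous_parametric_intervalIntegral_of_continuous'
      (f := fun x t => K (x, t)) hK.continuous a b)
  | succ n ih =>
    push_cast at hK ⊢
    have hK₁ : ContDiff ℝ 1 K := hK.of_le le_add_self
    refine contDiff_succ_iff_fderiv_apply.2
      ⟨fun x => (hasFDerivAt_intervalIntegral_of_contDiff hK₁ a b x).differentiableAt,
        by simp, fun v => ?_⟩
    simp only [fderiv_intervalIntegral_apply hK₁]
    exact ih (contDiff_fderiv_apply_const hK (v, 0))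

theorem fderiv_fderiv_intervalIntegral_apply [FiniteDimensional ℝ E] (hK : ContDiff ℝ 2 K)
    (a b : ℝ) (x v w : E) :
    fderiv ℝ (fderiv ℝ fun y => ∫ t in a..b, K (y, t)) x v w =
      ∫ t in a..b, fderiv ℝ (fderiv ℝ K) (x, t) (v, 0) (w, 0) := by
  rw [fderiv_fderiv_apply (contDiff_intervalIntegral (n := 2) hK a b)]
  simp only [fderiv_intervalIntegral_apply (hK.of_le one_le_two), fderiv_fderiv_apply hK]
  exact fderiv_intervalIntegral_apply (contDiff_fderiv_apply_const (n := 1) hK (w, 0)) a b x v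

end ParametricIntegral

section Ellipse

variable {V : Type*} [NormedAddCommGroup V] [NormedSpace ℝ V]

/-- The ellipse with conjugate semi-axes `u` and `v`, which is the unit circle of the plane they
span when they are orthonormal. -/
noncomputable def ellipse (u v : V) (t : ℝ) : V := cos t • u + sin t • v

variable (u v : V)

theorem contDiff_ellipse {n : WithTop ℕ∞} : ContDiff ℝ n (ellipse u v) :=
  (contDiff_cos.smul contDiff_const).add (contDiff_sin.smul contDiff_const)

@[fun_prop]
theorem continuous_ellipse : Continuous (ellipse u v) :=
  (contDiff_ellipse u v (n := 0)).continuous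

theorem hasDerivAt_ellipse (t : ℝ) : HasDerivAt (ellipse u v) (ellipse v (-u) t) t := by
  convert! ((hasDerivAt_cos t).smul_const u).add ((hasDerivAt_sin t).smul_const v) using 1
  simp only [ellipse]
  module

theorem ellipse_neg_neg (t : ℝ) : ellipse (-u) (-v) t = -ellipse u v t := by
  simp only [ellipse]
  module

theorem ellipse_add_pi (t : ℝ) : ellipse u v (t + π) = -ellipse u v t := by
  simp only [ellipse, cos_add_pi, sin_add_pi]
  module

theorem periodic_ellipse : Function.Periodic (ellipse u v) (2 * π) := fun t => by
  simp only [ellipse, cos_add_two_pi, sin_add_two_pi]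

theorem integral_comp_neg_ellipse {F : Type*} [NormedAddCommGroup F] [NormedSpace ℝ F]
    (φ : V → F) :
    ∫ t in (0 : ℝ)..2 * π, φ (-ellipse u v t) = ∫ t in (0 : ℝ)..2 * π, φ (ellipse u v t) := by
  have hper : Function.Periodic (fun t => φ (ellipse u v t)) (2 * π) :=
    (periodic_ellipse u v).comp φ
  simp only [← ellipse_add_pi]
  rw [intervalIntegral.integral_comp_add_right fun t => φ (ellipse u v t), zero_add, add_comm,
    hper.intervalIntegral_add_eq π 0, zero_add]

theorem bilin_ellipse_add_bilin_ellipse (B : V →L[ℝ] V →L[ℝ] ℝ) (t : ℝ) :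
    B (ellipse u v t) (ellipse u v t) + B (ellipse v (-u) t) (ellipse v (-u) t) =
      B u u + B v v := by
  simp only [ellipse, map_add, map_smul, map_neg, add_apply, smul_apply, neg_apply, smul_eq_mul]
  linear_combination (B u u + B v v) * sin_sq_add_cos_sq t

/-- The sum of the second derivatives of `f` along `u` and along `v`: the Laplacian of `f` in the
plane they span when they are orthonormal. -/
noncomputable def planeLaplacian (f : V → ℝ) (u v x : V) : ℝ :=
  fderiv ℝ (fderiv ℝ f) x u u + fderiv ℝ (fderiv ℝ f) x v v

variable {f : V → ℝ}

theorem continuous_planeLaplacian (hf : ContDiff ℝ 2 f) :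
    Continuous (planeLaplacian f u v) := by
  unfold planeLaplacian
  fun_prop

/-- The angular term `ρ⁻¹ ∂²f/∂t²` of `ρ Δf` in polar coordinates is an exact derivative, so that it
integrates to zero over a period. -/
theorem integral_polar_planeLaplacian (hf : ContDiff ℝ 2 f) (a : V) (ρ : ℝ) :
    ∫ t in (0 : ℝ)..2 * π,
        (ρ * fderiv ℝ (fderiv ℝ f) (a + ρ • ellipse u v t) (ellipse u v t) (ellipse u v t) +
          fderiv ℝ f (a + ρ • ellipse u v t) (ellipse u v t)) =
      ∫ t in (0 : ℝ)..2 * π, ρ * planeLaplacian f u v (a + ρ • ellipse u v t) := by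
  have hf₁ := hf.continuous_fderiv two_ne_zero
  have hangular (t : ℝ) :
      HasDerivAt (fun t => fderiv ℝ f (a + ρ • ellipse u v t) (ellipse v (-u) t))
        (ρ * planeLaplacian f u v (a + ρ • ellipse u v t) -
          (ρ * fderiv ℝ (fderiv ℝ f) (a + ρ • ellipse u v t) (ellipse u v t) (ellipse u v t) +
            fderiv ℝ f (a + ρ • ellipse u v t) (ellipse u v t))) t := by
    have hpoint : HasDerivAt (fun t => a + ρ • ellipse u v t) (ρ • ellipse v (-u) t) t :=
      ((hasDerivAt_ellipse u v t).const_smul ρ).const_add a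
    refine (hasDerivAt_fderiv_comp_apply hf hpoint (hasDerivAt_ellipse v (-u) t)).congr_deriv ?_
    rw [planeLaplacian, ← bilin_ellipse_add_bilin_ellipse u v _ t, ellipse_neg_neg]
    simp only [map_smul, map_neg, smul_apply, smul_eq_mul]
    ring
  have hΔ := continuous_planeLaplacian u v hf
  have hzero := integral_eq_sub_of_hasDerivAt (a := 0) (b := 2 * π) (fun t _ => hangular t)
    (Continuous.intervalIntegrable (by fun_prop) _ _)
  rw [intervalIntegral.integral_sub (Continuous.intervalIntegrable (by fun_prop) _ _)
    (Continuous.intervalIntegrable (by fun_prop) _ _), (periodic_ellipse u v).eq,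
    (periodic_ellipse v (-u)).eq, sub_self] at hzero
  exact (sub_eq_zero.1 hzero).symm

end Ellipse

/-- The Euler–Poisson–Darboux equation `M_xx + M_x / x = M_yy + M_y / y`, multiplied by `x * y` so
that it makes sense on the axes. -/
def EulerPoissonDarboux (M : ℝ × ℝ → ℝ) : Prop :=
  ∀ x y : ℝ,
    x * y * (fderiv ℝ (fderiv ℝ M) (x, y) (1, 0) (1, 0) -
        fderiv ℝ (fderiv ℝ M) (x, y) (0, 1) (0, 1)) =
      x * fderiv ℝ M (x, y) (0, 1) - y * fderiv ℝ M (x, y) (1, 0)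

namespace EulerPoissonDarboux

section Energy

variable {w : ℝ × ℝ → ℝ}

/-- The energy `x * y * (w_x ^ 2 + w_y ^ 2)` on the segment `x = s`, `0 ≤ y ≤ s`, as a density in
`τ` after the substitution `y = s * τ`, which makes the domain of integration constant. -/
noncomputable def energyDensity (w : ℝ × ℝ → ℝ) (s τ : ℝ) : ℝ :=
  s ^ 2 * τ * (fderiv ℝ w (s, s * τ) (1, 0) ^ 2 + fderiv ℝ w (s, s * τ) (0, 1) ^ 2)

/-- The flux of the energy through the ray of slope `τ`: its `τ`-derivative is the `s`-derivative
of `energyDensity`, up to a term of constant sign. -/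
noncomputable def energyFlux (w : ℝ × ℝ → ℝ) (s τ : ℝ) : ℝ :=
  s * τ ^ 2 * (fderiv ℝ w (s, s * τ) (1, 0) ^ 2 + fderiv ℝ w (s, s * τ) (0, 1) ^ 2) +
    2 * s * τ * (fderiv ℝ w (s, s * τ) (1, 0) * fderiv ℝ w (s, s * τ) (0, 1))

/-- The derivative of `energyDensity` in `s` along the ray of slope `τ`. -/
noncomputable def energyRate (w : ℝ × ℝ → ℝ) (s τ : ℝ) : ℝ :=
  2 * s * τ * (fderiv ℝ w (s, s * τ) (1, 0) ^ 2 + fderiv ℝ w (s, s * τ) (0, 1) ^ 2) +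
    2 * s ^ 2 * τ *
      (fderiv ℝ w (s, s * τ) (1, 0) * fderiv ℝ (fderiv ℝ w) (s, s * τ) (1, τ) (1, 0) +
        fderiv ℝ w (s, s * τ) (0, 1) * fderiv ℝ (fderiv ℝ w) (s, s * τ) (1, τ) (0, 1))

theorem continuous_energyDensity (hw : ContDiff ℝ 2 w) (s : ℝ) :
    Continuous (energyDensity w s) := by
  have hw₁ := hw.continuous_fderiv two_ne_zero
  unfold energyDensity
  fun_prop

theorem continuous_energyRate (hw : ContDiff ℝ 2 w) :
    Continuous fun z : ℝ × ℝ => energyRate w z.1 z.2 := by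
  have hw₁ := hw.continuous_fderiv two_ne_zero
  unfold energyRate
  fun_prop

theorem hasDerivAt_energyDensity (hw : ContDiff ℝ 2 w) (s τ : ℝ) :
    HasDerivAt (fun s => energyDensity w s τ) (energyRate w s τ) s := by
  have hray : HasDerivAt (fun s : ℝ => (s, s * τ)) (1, τ) s := by
    simpa using (hasDerivAt_id s).prodMk ((hasDerivAt_id s).mul_const τ)
  have hgrad (v : ℝ × ℝ) := hasDerivAt_fderiv_comp_apply hw hray (hasDerivAt_const s v)
  refine ((((hasDerivAt_id s).pow 2).mul_const τ).mul
    (((hgrad (1, 0)).pow 2).add ((hgrad (0, 1)).pow 2))).congr_deriv ?_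
  simp only [Nat.cast_ofNat, id_eq, Nat.add_one_sub_one, pow_one, mul_one, Pi.add_apply,
    Pi.pow_apply, map_zero, add_zero, energyRate]
  ring

theorem hasDerivAt_energyFlux (h : EulerPoissonDarboux w) (hw : ContDiff ℝ 2 w) (s τ : ℝ) :
    HasDerivAt (energyFlux w s)
      (energyRate w s τ + 2 * s * τ * fderiv ℝ w (s, s * τ) (1, 0) ^ 2) τ := by
  have hray : HasDerivAt (fun τ : ℝ => (s, s * τ)) (0, s) τ := by
    simpa using (hasDerivAt_const τ s).prodMk ((hasDerivAt_id τ).const_mul s)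
  have hgrad (v : ℝ × ℝ) := hasDerivAt_fderiv_comp_apply hw hray (hasDerivAt_const τ v)
  refine (((((hasDerivAt_id τ).pow 2).const_mul s).mul
    (((hgrad (1, 0)).pow 2).add ((hgrad (0, 1)).pow 2))).add
    (((hasDerivAt_id τ).const_mul (2 * s)).mul
      ((hgrad (1, 0)).mul (hgrad (0, 1))))).congr_deriv ?_
  have hsymm : fderiv ℝ (fderiv ℝ w) (s, s * τ) (1, 0) (0, 1) =
      fderiv ℝ (fderiv ℝ w) (s, s * τ) (0, 1) (1, 0) :=
    (hw.contDiffAt.isSymmSndFDerivAt (by simp)).eq _ _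
  have hdir : fderiv ℝ (fderiv ℝ w) (s, s * τ) (0, s) =
      s • fderiv ℝ (fderiv ℝ w) (s, s * τ) (0, 1) := by
    rw [continuousLinearMap_apply_mk _ 0 s, zero_smul, zero_add]
  have hdir' : fderiv ℝ (fderiv ℝ w) (s, s * τ) (1, τ) =
      fderiv ℝ (fderiv ℝ w) (s, s * τ) (1, 0) + τ • fderiv ℝ (fderiv ℝ w) (s, s * τ) (0, 1) := by
    rw [continuousLinearMap_apply_mk _ 1 τ, one_smul]
  simp only [Nat.cast_ofNat, id_eq, Nat.add_one_sub_one, pow_one, mul_one, Pi.add_apply,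
    Pi.pow_apply, Pi.mul_apply, map_zero, add_zero, energyRate, hdir, hdir', add_apply, smul_apply,
    smul_eq_mul, hsymm]
  linear_combination (-2 * fderiv ℝ w (s, s * τ) (1, 0)) * h s (s * τ)

theorem fderiv_add_fderiv_eq_zero_of_diagonal {x : ℝ} (hw : DifferentiableAt ℝ w (x, x))
    (hd : ∀ x, w (x, x) = 0) :
    fderiv ℝ w (x, x) (1, 0) + fderiv ℝ w (x, x) (0, 1) = 0 := by
  have hdiag : HasDerivAt (fun x => w (x, x)) (fderiv ℝ w (x, x) (1, 1)) x :=
    hw.hasFDerivAt.comp_hasDerivAt (f := fun x => (x, x)) x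
      ((hasDerivAt_id x).prodMk (hasDerivAt_id x))
  simp only [hd] at hdiag
  rw [← map_add, Prod.mk_add_mk, add_zero, zero_add]
  exact hdiag.unique (hasDerivAt_const x 0)

theorem integral_energyRate (h : EulerPoissonDarboux w) (hw : ContDiff ℝ 2 w)
    (hd : ∀ x, w (x, x) = 0) (s : ℝ) :
    ∫ τ in (0 : ℝ)..1, energyRate w s τ =
      -∫ τ in (0 : ℝ)..1, 2 * s * τ * fderiv ℝ w (s, s * τ) (1, 0) ^ 2 := by
  have hw₁ := hw.continuous_fderiv two_ne_zero
  have hrate : Continuous (energyRate w s) := (continuous_energyRate hw).comp (.prodMk_right s)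
  have hflux₀ : energyFlux w s 0 = 0 := by simp [energyFlux]
  have hflux₁ : energyFlux w s 1 = 0 := calc
    energyFlux w s 1 = s * (fderiv ℝ w (s, s) (1, 0) + fderiv ℝ w (s, s) (0, 1)) ^ 2 := by
      simp only [energyFlux, mul_one]
      ring
    _ = 0 := by
      rw [fderiv_add_fderiv_eq_zero_of_diagonal (hw.differentiable two_ne_zero _) hd]
      simp
  have hint := integral_eq_sub_of_hasDerivAt (a := 0) (b := 1)
    (fun τ _ => h.hasDerivAt_energyFlux hw s τ)
    (Continuous.intervalIntegrable (by fun_prop) _ _)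
  rw [intervalIntegral.integral_add (Continuous.intervalIntegrable (by fun_prop) _ _)
    (Continuous.intervalIntegrable (by fun_prop) _ _), hflux₀, hflux₁] at hint
  linear_combination hint

theorem antitoneOn_integral_energyDensity (h : EulerPoissonDarboux w) (hw : ContDiff ℝ 2 w)
    (hd : ∀ x, w (x, x) = 0) :
    AntitoneOn (fun s => ∫ τ in (0 : ℝ)..1, energyDensity w s τ) (Set.Ici 0) := by
  have hderiv (s : ℝ) := hasDerivAt_intervalIntegral_of_continuous (continuous_energyDensity hw)
    (continuous_energyRate hw) (hasDerivAt_energyDensity hw) 0 1 s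
  refine antitoneOn_of_deriv_nonpos (convex_Ici 0)
    (fun s _ => (hderiv s).continuousAt.continuousWithinAt)
    (fun s _ => (hderiv s).differentiableAt.differentiableWithinAt) fun s hs => ?_
  rw [interior_Ici] at hs
  rw [(hderiv s).deriv, h.integral_energyRate hw hd, neg_nonpos]
  refine intervalIntegral.integral_nonneg zero_le_one fun τ hτ => ?_
  have := hτ.1
  have : 0 < s := hs
  positivity

theorem energyDensity_eq_zero (h : EulerPoissonDarboux w) (hw : ContDiff ℝ 2 w)
    (hd : ∀ x, w (x, x) = 0) {s τ : ℝ} (hs : 0 ≤ s) (hτ : τ ∈ Set.Icc (0 : ℝ) 1) :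
    energyDensity w s τ = 0 := by
  have hnonneg : ∀ τ ∈ Set.Icc (0 : ℝ) 1, 0 ≤ energyDensity w s τ := fun τ hτ => by
    have := hτ.1
    unfold energyDensity
    positivity
  have henergy : ∫ τ in (0 : ℝ)..1, energyDensity w s τ ≤ 0 := by
    simpa [energyDensity] using
      h.antitoneOn_integral_energyDensity hw hd Set.self_mem_Ici (Set.mem_Ici.2 hs) hs
  by_contra hne
  exact henergy.not_gt <| intervalIntegral.integral_pos one_pos
    (continuous_energyDensity hw s).continuousOn
    (fun t ht => hnonneg t (Set.Ioc_subset_Icc_self ht))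
    ⟨τ, hτ, (hnonneg τ hτ).lt_of_ne' hne⟩

theorem fderiv_snd_eq_zero (h : EulerPoissonDarboux w) (hw : ContDiff ℝ 2 w)
    (hd : ∀ x, w (x, x) = 0) {x y : ℝ} (hy : 0 < y) (hyx : y ≤ x) :
    fderiv ℝ w (x, y) (0, 1) = 0 := by
  have hx : 0 < x := hy.trans_le hyx
  have hdensity := h.energyDensity_eq_zero hw hd hx.le
    (τ := y / x) ⟨by positivity, (div_le_one hx).2 hyx⟩
  rw [energyDensity, mul_div_cancel₀ _ hx.ne'] at hdensity
  have hsum := (mul_eq_zero.1 hdensity).resolve_left (by positivity)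
  exact pow_eq_zero_iff two_ne_zero |>.1
    ((add_eq_zero_iff_of_nonneg (sq_nonneg _) (sq_nonneg _)).1 hsum).2

theorem eq_zero_of_diagonal (h : EulerPoissonDarboux w) (hw : ContDiff ℝ 2 w)
    (hd : ∀ x, w (x, x) = 0) {x y : ℝ} (hy : 0 ≤ y) (hyx : y ≤ x) : w (x, y) = 0 := by
  rcases hyx.eq_or_lt with rfl | hlt
  · exact hd y
  have hderiv (t : ℝ) : HasDerivAt (fun t => w (x, t)) (fderiv ℝ w (x, t) (0, 1)) t :=
    (hw.differentiable two_ne_zero (x, t)).hasFDerivAt.comp_hasDerivAt t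
      ((hasDerivAt_const t x).prodMk (hasDerivAt_id t))
  obtain ⟨c, hc, hslope⟩ := exists_hasDerivAt_eq_slope _ _ hlt
    (fun t _ => (hderiv t).continuousAt.continuousWithinAt) fun t _ => hderiv t
  rw [h.fderiv_snd_eq_zero hw hd (hy.trans_lt hc.1) hc.2.le, hd, zero_sub, eq_comm,
    div_eq_zero_iff, neg_eq_zero] at hslope
  exact hslope.resolve_right (sub_pos.2 hlt).ne'

end Energy

variable {M N : ℝ × ℝ → ℝ}

theorem comp_swap (h : EulerPoissonDarboux M) (hM : ContDiff ℝ 2 M) :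
    EulerPoissonDarboux fun z => M z.swap := fun x y => by
  have hM' : ContDiff ℝ 2 fun z : ℝ × ℝ => M z.swap :=
    hM.comp (contDiff_snd.prodMk contDiff_fst)
  have hline (v : ℝ × ℝ) (s : ℝ) : M ((x, y) + s • v).swap = M ((y, x) + s • v.swap) := by
    simp
  have hfst (v : ℝ × ℝ) := fderiv_apply_eq_of_forall_line (hM.differentiable two_ne_zero _)
    (hM'.differentiable two_ne_zero _) (hline v)
  have hsnd (v : ℝ × ℝ) := fderiv_fderiv_apply_eq_of_forall_line hM hM' (hline v)
  simp only [hfst, hsnd, Prod.swap_prod_mk]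
  linear_combination -h y x

theorem sub (hM : EulerPoissonDarboux M) (hN : EulerPoissonDarboux N) (hM₂ : ContDiff ℝ 2 M)
    (hN₂ : ContDiff ℝ 2 N) : EulerPoissonDarboux (M - N) := fun x y => by
  have hfst : fderiv ℝ (M - N) = fderiv ℝ M - fderiv ℝ N := funext fun z =>
    fderiv_sub (hM₂.differentiable two_ne_zero z) (hN₂.differentiable two_ne_zero z)
  have hsnd : fderiv ℝ (fderiv ℝ M - fderiv ℝ N) (x, y) =
      fderiv ℝ (fderiv ℝ M) (x, y) - fderiv ℝ (fderiv ℝ N) (x, y) :=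
    fderiv_sub ((hM₂.fderiv_right (m := 1) le_rfl).differentiable one_ne_zero _)
      ((hN₂.fderiv_right (m := 1) le_rfl).differentiable one_ne_zero _)
  rw [hfst, hsnd]
  simp only [sub_apply, Pi.sub_apply]
  linear_combination hM x y - hN x y

theorem apply_swap (h : EulerPoissonDarboux M) (hM : ContDiff ℝ 2 M) {x y : ℝ}
    (hx : 0 ≤ x) (hy : 0 ≤ y) : M (x, y) = M (y, x) := by
  have hM' : ContDiff ℝ 2 fun z : ℝ × ℝ => M z.swap :=
    hM.comp (contDiff_snd.prodMk contDiff_fst)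
  have hzero {s t : ℝ} (ht : 0 ≤ t) (hts : t ≤ s) : M (s, t) = M (t, s) :=
    sub_eq_zero.1 <| (h.sub (h.comp_swap hM) hM hM').eq_zero_of_diagonal (hM.sub hM')
      (fun x => sub_self (M (x, x))) ht hts
  rcases le_total y x with hyx | hxy
  · exact hzero hy hyx
  · exact (hzero hx hxy).symm

end EulerPoissonDarboux

section BiellipseIntegral

variable {V : Type*} [NormedAddCommGroup V] [NormedSpace ℝ V] {f : V → ℝ}

/-- The integral of `f` over the product of two ellipses centred at `a`, with radii `R.1` for the
semi-axes `u₁`, `v₁` and `R.2` for `u₂`, `v₂`. It is a function of the pair `R`, so that the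
Euler–Poisson–Darboux equation can be stated for it. -/
noncomputable def biellipseIntegral (f : V → ℝ) (a u₁ v₁ u₂ v₂ : V) (R : ℝ × ℝ) : ℝ :=
  ∫ θ₂ in (0 : ℝ)..2 * π, ∫ θ₁ in (0 : ℝ)..2 * π,
    f (a + R.1 • ellipse u₁ v₁ θ₁ + R.2 • ellipse u₂ v₂ θ₂)

variable (a u₁ v₁ u₂ v₂ : V)

theorem biellipseIntegral_swap (hf : Continuous f) (R : ℝ × ℝ) :
    biellipseIntegral f a u₁ v₁ u₂ v₂ R.swap = biellipseIntegral f a u₂ v₂ u₁ v₁ R := by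
  have hcont : Continuous (Function.uncurry fun θ₂ θ₁ =>
      f (a + R.swap.1 • ellipse u₁ v₁ θ₁ + R.swap.2 • ellipse u₂ v₂ θ₂)) := by
    unfold Function.uncurry
    fun_prop
  rw [biellipseIntegral, intervalIntegral_intervalIntegral_swap
    ((hcont.continuousOn.integrableOn_compact (isCompact_uIcc.prod isCompact_uIcc)).mono_set
      (Set.prod_mono Set.uIoc_subset_uIcc Set.uIoc_subset_uIcc))]
  simp only [biellipseIntegral, Prod.fst_swap, Prod.snd_swap, add_right_comm a]

theorem biellipseIntegral_neg_fst (x y : ℝ) :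
    biellipseIntegral f a u₁ v₁ u₂ v₂ (-x, y) = biellipseIntegral f a u₁ v₁ u₂ v₂ (x, y) := by
  simp only [biellipseIntegral, neg_smul, ← smul_neg]
  refine intervalIntegral.integral_congr fun θ₂ _ => ?_
  exact integral_comp_neg_ellipse u₁ v₁ fun e => f (a + x • e + y • ellipse u₂ v₂ θ₂)

theorem biellipseIntegral_abs_fst (x y : ℝ) :
    biellipseIntegral f a u₁ v₁ u₂ v₂ (|x|, y) = biellipseIntegral f a u₁ v₁ u₂ v₂ (x, y) := by
  rcases abs_choice x with hx | hx <;> simp only [hx, biellipseIntegral_neg_fst]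

theorem biellipseIntegral_abs (hf : Continuous f) (x y : ℝ) :
    biellipseIntegral f a u₁ v₁ u₂ v₂ (|x|, |y|) = biellipseIntegral f a u₁ v₁ u₂ v₂ (x, y) := by
  rw [biellipseIntegral_abs_fst, ← Prod.swap_prod_mk, biellipseIntegral_swap _ _ _ _ _ hf,
    biellipseIntegral_abs_fst, ← biellipseIntegral_swap _ _ _ _ _ hf, Prod.swap_prod_mk]

/-- The integrand of `biellipseIntegral` as a function of all its variables `((R, θ₂), θ₁)`. -/
noncomputable def biellipseIntegrand (f : V → ℝ) (a u₁ v₁ u₂ v₂ : V)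
    (z : ((ℝ × ℝ) × ℝ) × ℝ) : ℝ :=
  f (a + z.1.1.1 • ellipse u₁ v₁ z.2 + z.1.1.2 • ellipse u₂ v₂ z.1.2)

theorem contDiff_biellipseIntegrand {n : WithTop ℕ∞} (hf : ContDiff ℝ n f) :
    ContDiff ℝ n (biellipseIntegrand f a u₁ v₁ u₂ v₂) := by
  have h₁ := contDiff_ellipse u₁ v₁ (n := n)
  have h₂ := contDiff_ellipse u₂ v₂ (n := n)
  unfold biellipseIntegrand
  fun_prop

theorem contDiff_biellipseIntegral {n : ℕ} (hf : ContDiff ℝ n f) :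
    ContDiff ℝ n (biellipseIntegral f a u₁ v₁ u₂ v₂) :=
  contDiff_intervalIntegral (contDiff_intervalIntegral
    (contDiff_biellipseIntegrand a u₁ v₁ u₂ v₂ hf) 0 (2 * π)) 0 (2 * π)

theorem biellipseIntegrand_line (R : ℝ × ℝ) (θ₁ θ₂ s : ℝ) :
    biellipseIntegrand f a u₁ v₁ u₂ v₂ (((R, θ₂), θ₁) + s • (((1, 0), 0), 0)) =
      f (a + R.1 • ellipse u₁ v₁ θ₁ + R.2 • ellipse u₂ v₂ θ₂ + s • ellipse u₁ v₁ θ₁) := by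
  simp only [biellipseIntegrand, Prod.smul_mk, Prod.fst_add, Prod.snd_add, smul_eq_mul, mul_one,
    mul_zero, add_zero]
  congr 1
  module

theorem fderiv_biellipseIntegral_fst (hf : ContDiff ℝ 2 f) (R : ℝ × ℝ) :
    fderiv ℝ (biellipseIntegral f a u₁ v₁ u₂ v₂) R (1, 0) =
      ∫ θ₂ in (0 : ℝ)..2 * π, ∫ θ₁ in (0 : ℝ)..2 * π,
        fderiv ℝ f (a + R.1 • ellipse u₁ v₁ θ₁ + R.2 • ellipse u₂ v₂ θ₂) (ellipse u₁ v₁ θ₁) := by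
  have hK := (contDiff_biellipseIntegrand a u₁ v₁ u₂ v₂ hf).of_le one_le_two
  refine (fderiv_intervalIntegral_apply (contDiff_intervalIntegral (n := 1) hK 0 (2 * π)) 0 (2 * π)
    R (1, 0)).trans ?_
  refine intervalIntegral.integral_congr fun θ₂ _ => ?_
  refine (fderiv_intervalIntegral_apply hK 0 (2 * π) (R, θ₂) ((1, 0), 0)).trans ?_
  refine intervalIntegral.integral_congr fun θ₁ _ => ?_
  exact fderiv_apply_eq_of_forall_line (hf.differentiable two_ne_zero _)
    (hK.differentiable one_ne_zero _) (biellipseIntegrand_line a u₁ v₁ u₂ v₂ R θ₁ θ₂)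

theorem fderiv_fderiv_biellipseIntegral_fst (hf : ContDiff ℝ 2 f) (R : ℝ × ℝ) :
    fderiv ℝ (fderiv ℝ (biellipseIntegral f a u₁ v₁ u₂ v₂)) R (1, 0) (1, 0) =
      ∫ θ₂ in (0 : ℝ)..2 * π, ∫ θ₁ in (0 : ℝ)..2 * π,
        fderiv ℝ (fderiv ℝ f) (a + R.1 • ellipse u₁ v₁ θ₁ + R.2 • ellipse u₂ v₂ θ₂)
          (ellipse u₁ v₁ θ₁) (ellipse u₁ v₁ θ₁) := by
  have hK := contDiff_biellipseIntegrand a u₁ v₁ u₂ v₂ hf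
  refine (fderiv_fderiv_intervalIntegral_apply (contDiff_intervalIntegral (n := 2) hK 0 (2 * π))
    0 (2 * π) R (1, 0) (1, 0)).trans ?_
  refine intervalIntegral.integral_congr fun θ₂ _ => ?_
  refine (fderiv_fderiv_intervalIntegral_apply hK 0 (2 * π) (R, θ₂) ((1, 0), 0) ((1, 0), 0)).trans
    ?_
  refine intervalIntegral.integral_congr fun θ₁ _ => ?_
  exact fderiv_fderiv_apply_eq_of_forall_line hf hK
    (biellipseIntegrand_line a u₁ v₁ u₂ v₂ R θ₁ θ₂)

theorem biellipseIntegral_planeLaplacian_fst (hf : ContDiff ℝ 2 f) (R : ℝ × ℝ) :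
    R.1 * biellipseIntegral (planeLaplacian f u₁ v₁) a u₁ v₁ u₂ v₂ R =
      R.1 * fderiv ℝ (fderiv ℝ (biellipseIntegral f a u₁ v₁ u₂ v₂)) R (1, 0) (1, 0) +
        fderiv ℝ (biellipseIntegral f a u₁ v₁ u₂ v₂) R (1, 0) := by
  have hf₁ := hf.continuous_fderiv two_ne_zero
  have hpolar (θ₂ : ℝ) := integral_polar_planeLaplacian u₁ v₁ hf
    (a + R.2 • ellipse u₂ v₂ θ₂) R.1
  simp only [add_right_comm a] at hpolar
  rw [fderiv_fderiv_biellipseIntegral_fst _ _ _ _ _ hf, fderiv_biellipseIntegral_fst _ _ _ _ _ hf,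
    biellipseIntegral]
  simp only [← intervalIntegral.integral_const_mul, ← hpolar]
  rw [← intervalIntegral.integral_add]
  · refine intervalIntegral.integral_congr fun θ₂ _ => ?_
    exact intervalIntegral.integral_add (Continuous.intervalIntegrable (by fun_prop) _ _)
      (Continuous.intervalIntegrable (by fun_prop) _ _)
  all_goals
    refine (continuous_parametric_intervalIntegral_of_continuous' ?_ _ _).intervalIntegrable _ _
    unfold Function.uncurry
    fun_prop

theorem biellipseIntegral_planeLaplacian_snd (hf : ContDiff ℝ 2 f) (R : ℝ × ℝ) :
    R.2 * biellipseIntegral (planeLaplacian f u₂ v₂) a u₁ v₁ u₂ v₂ R =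
      R.2 * fderiv ℝ (fderiv ℝ (biellipseIntegral f a u₁ v₁ u₂ v₂)) R (0, 1) (0, 1) +
        fderiv ℝ (biellipseIntegral f a u₁ v₁ u₂ v₂) R (0, 1) := by
  have hM := contDiff_biellipseIntegral (n := 2) a u₁ v₁ u₂ v₂ hf
  have hM' := contDiff_biellipseIntegral (n := 2) a u₂ v₂ u₁ v₁ hf
  have hline (s : ℝ) : biellipseIntegral f a u₁ v₁ u₂ v₂ (R + s • (0, 1)) =
      biellipseIntegral f a u₂ v₂ u₁ v₁ (R.swap + s • (1, 0)) := by
    rw [← biellipseIntegral_swap _ _ _ _ _ hf.continuous]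
    simp
  rw [fderiv_fderiv_apply_eq_of_forall_line hM' hM hline,
    fderiv_apply_eq_of_forall_line (hM'.differentiable two_ne_zero _)
      (hM.differentiable two_ne_zero _) hline, ← R.fst_swap,
    ← biellipseIntegral_planeLaplacian_fst a u₂ v₂ u₁ v₁ hf,
    ← biellipseIntegral_swap _ _ _ _ _ (continuous_planeLaplacian u₂ v₂ hf)]

theorem eulerPoissonDarboux_biellipseIntegral (hf : ContDiff ℝ 2 f)
    (hΔ : planeLaplacian f u₁ v₁ = planeLaplacian f u₂ v₂) :
    EulerPoissonDarboux (biellipseIntegral f a u₁ v₁ u₂ v₂) := fun x y => by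
  have hfst := biellipseIntegral_planeLaplacian_fst a u₁ v₁ u₂ v₂ hf (x, y)
  have hsnd := biellipseIntegral_planeLaplacian_snd a u₁ v₁ u₂ v₂ hf (x, y)
  rw [hΔ] at hfst
  linear_combination x * hsnd - y * hfst

end BiellipseIntegral

theorem planeLaplacian_eq_of_ultrahyperbolic {r : ℝ → ℝ → ℝ → ℝ → ℝ}
    (hr : ContDiff ℝ 2 (fun p : ℝ × ℝ × ℝ × ℝ => r p.1 p.2.1 p.2.2.1 p.2.2.2))
    (huh : ∀ ξ₁ ξ₂ ξ₃ ξ₄ : ℝ,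
      deriv (fun t => deriv (fun s => r s ξ₂ ξ₃ ξ₄) t) ξ₁
        - deriv (fun t => deriv (fun s => r ξ₁ s ξ₃ ξ₄) t) ξ₂
        - deriv (fun t => deriv (fun s => r ξ₁ ξ₂ s ξ₄) t) ξ₃
        + deriv (fun t => deriv (fun s => r ξ₁ ξ₂ ξ₃ s) t) ξ₄ = 0) :
    planeLaplacian (fun p : ℝ × ℝ × ℝ × ℝ => r p.1 p.2.1 p.2.2.1 p.2.2.2)
        (1, 0, 0, 0) (0, 0, 0, 1) =
      planeLaplacian (fun p : ℝ × ℝ × ℝ × ℝ => r p.1 p.2.1 p.2.2.1 p.2.2.2)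
        (0, 1, 0, 0) (0, 0, 1, 0) := by
  funext ⟨x₁, x₂, x₃, x₄⟩
  have h₁ := deriv_deriv_comp_line hr (0, x₂, x₃, x₄) (1, 0, 0, 0) x₁
  have h₂ := deriv_deriv_comp_line hr (x₁, 0, x₃, x₄) (0, 1, 0, 0) x₂
  have h₃ := deriv_deriv_comp_line hr (x₁, x₂, 0, x₄) (0, 0, 1, 0) x₃
  have h₄ := deriv_deriv_comp_line hr (x₁, x₂, x₃, 0) (0, 0, 0, 1) x₄
  simp only [Prod.smul_mk, Prod.mk_add_mk, smul_eq_mul, mul_one, mul_zero, add_zero, zero_add]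
    at h₁ h₂ h₃ h₄
  simp only [planeLaplacian, ← h₁, ← h₂, ← h₃, ← h₄]
  linear_combination huh x₁ x₂ x₃ x₄

theorem asgeirsson_second_general {V : Type*} [NormedAddCommGroup V] [NormedSpace ℝ V]
    {f : V → ℝ} (hf : ContDiff ℝ 2 f) {u₁ v₁ u₂ v₂ : V}
    (hΔ : planeLaplacian f u₁ v₁ = planeLaplacian f u₂ v₂) (a : V) (R₁ R₂ : ℝ) :
    biellipseIntegral f a u₁ v₁ u₂ v₂ (R₁, R₂) = biellipseIntegral f a u₁ v₁ u₂ v₂ (R₂, R₁) := by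
  rw [← biellipseIntegral_abs _ _ _ _ _ hf.continuous R₁,
    ← biellipseIntegral_abs _ _ _ _ _ hf.continuous R₂]
  exact (eulerPoissonDarboux_biellipseIntegral a u₁ v₁ u₂ v₂ hf hΔ).apply_swap
    (contDiff_biellipseIntegral (n := 2) a u₁ v₁ u₂ v₂ hf) (abs_nonneg R₁) (abs_nonneg R₂)

/-- Asgeirsson's second theorem: if `r : ℝ⁴ → ℝ` is C² and satisfies the
ultrahyperbolic equation on all of `ℝ⁴`, then for every point and all radii
`R₁, R₂ ≥ 0` the double integral over the pair of circles of radii `(R₁, R₂)` in the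
`(ξ₁,ξ₄)`- and `(ξ₂,ξ₃)`-planes equals the double integral with the radii
interchanged. -/
theorem asgeirsson_second
    (r : ℝ → ℝ → ℝ → ℝ → ℝ)
    (hr : ContDiff ℝ 2 (fun p : ℝ × ℝ × ℝ × ℝ => r p.1 p.2.1 p.2.2.1 p.2.2.2))
    (huh : ∀ ξ₁ ξ₂ ξ₃ ξ₄ : ℝ,
      deriv (fun t => deriv (fun s => r s ξ₂ ξ₃ ξ₄) t) ξ₁
        - deriv (fun t => deriv (fun s => r ξ₁ s ξ₃ ξ₄) t) ξ₂
        - deriv (fun t => deriv (fun s => r ξ₁ ξ₂ s ξ₄) t) ξ₃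
        + deriv (fun t => deriv (fun s => r ξ₁ ξ₂ ξ₃ s) t) ξ₄ = 0) :
    ∀ (ξ₁ ξ₂ ξ₃ ξ₄ R₁ R₂ : ℝ), 0 ≤ R₁ → 0 ≤ R₂ →
      (∫ θ₂ in (0:ℝ)..(2 * π), ∫ θ₁ in (0:ℝ)..(2 * π),
          r (ξ₁ + R₁ * cos θ₁) (ξ₂ + R₂ * cos θ₂) (ξ₃ + R₂ * sin θ₂) (ξ₄ + R₁ * sin θ₁))
        = ∫ θ₂ in (0:ℝ)..(2 * π), ∫ θ₁ in (0:ℝ)..(2 * π),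
            r (ξ₁ + R₂ * cos θ₁) (ξ₂ + R₁ * cos θ₂) (ξ₃ + R₁ * sin θ₂) (ξ₄ + R₂ * sin θ₁) := by
  intro ξ₁ ξ₂ ξ₃ ξ₄ R₁ R₂ _ _
  simpa [biellipseIntegral, ellipse] using asgeirsson_second_general hr
    (planeLaplacian_eq_of_ultrahyperbolic hr huh) (ξ₁, ξ₂, ξ₃, ξ₄) R₁ R₂
end
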